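/- Let 0 < p < q ≤ +∞ and 1/r = 1/p − 1/q. Let μ and ν be non-negative Borel measures on I = (a,b) ⊆ ℝ, let w ∈ B⁺(I), and let u ∈ B⁺(I) satisfy ‖u‖_{q,(a,t],ν} < ∞ for all t ∈ I and u ≠ 0 ν-a.e. on (a,b). Then there exists a constant c > 0 such that ‖gw‖_{p,(a,b),μ} ≤ c ‖u(x) ‖g‖_{∞,(x,b),μ}‖_{q,(a,b),ν} for all g ∈ B⁺(I) if and only if A₂′ := ( ∫_{(a,b)} ‖w‖_{p,(a,x],μ}^r d( −‖u‖_{q,(a,x+],ν}^{−r} ) )^{1/r} + ‖w‖_{p,(a,b),μ} · ‖u‖_{q,(a,b),ν}^{−1} < ∞, where ‖u‖_{q,(a,x+],ν} := lim_{s→x+} ‖u‖_{q,(a,s],ν} and the integral is the Lebesgue–Stieltjes integral with respect to the non-decreasing right-continuous function x ↦ −‖u‖_{q,(a,x+],ν}^{−r}. Moreover, the best possible constant c satisfies c ≈ A₂′, with equivalence constants depending only on p and q. -/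

import Mathlib

/-! The proof has two halves, with explicit constants `2^{1/r}` and `2^{1/p} + 1`. Throughout,
`D(x) = ‖w‖_{p,(a,x],μ}^p` is the distribution function of the measure `W = w^p dμ`, and
`U(t) = ‖u‖_{q,(a,t),ν}`. The function `λ([t,b)) + U(b)^{-r}` is comparable with `U(t)^{-r}`:
`λ([t,b)) ≤ U(t)^{-r} ≤ λ([t,b)) + U(b)^{-r}` (`lam_Ico_le`, `inv_le_lam_Ico_add`), also in the
degenerate case in which `u` vanishes near `a` and these quantities are infinite.

*Sufficiency* (`inequality_of_finite`). Almost everywhere, `g(t)` is at most the left limit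
`Gm(t)` of the non-increasing function `G(x) = ‖g‖_{∞,(x,b),μ}`. The weight
`Φ(t) = ∫_{[t,b)} D^{r/q} dλ + D(b)^{r/q} U(b)^{-r}` of `exists_weight` is non-increasing, satisfies
`∫ Φ dW ≤ 2 A₂′^r` by Tonelli, and, since `D` is monotone, `Φ ≥ D^{r/q} U^{-r}` where `U ≠ 0`.
For `q < ∞`, Hölder's inequality gives
`∫ Gm^p dW ≤ (∫ Gm^q Φ^{-q/r} dW)^{p/q} (∫ Φ dW)^{p/r}`. As `Φ` is
non-increasing, `∫_{(a,t]} Φ^{-q/r} dW ≤ D(t) Φ(t)^{-q/r} ≤ U(t)^q = ∫_{(a,t)} u^q dν`, and comparing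
distribution functions of non-increasing functions yields `∫ Gm^q Φ^{-q/r} dW ≤ ∫ G^q u^q dν`
(`lintegral_iInf_rpow_le`). For `q = ∞`, the pointwise bound
`Gm(t) U(t) ≤ ‖u G‖_{∞,(a,b),ν}` replaces Hölder's inequality (`lintegral_rpow_le_of_mul_le`).

*Necessity* (`le_of_inequality`). The test functions `1` and `1_{(a,t]}` bound the second term of
`A₂′` and show `‖w‖_{p,(a,t],μ} ≤ c U(t)`, so that nothing is lost where `U = 0`. On an interval
`(α,β]` with `‖u‖_{q,(a,α+],ν} > 0`, the measure `λ` is finite, and the inequality is tested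
with `g(t)^p = ∫_{[t,b) ∩ (α,β]} D^{r/q} dλ` (`setLIntegral_Ioc_le`). With `J = ∫_{(α,β]} D^{r/p} dλ`,
Tonelli bounds the left-hand side below by `J^{1/p}`, and the Hardy inequality `hardy_tail` bounds
the right-hand side above by `2^{1/p} c J^{1/q}`. Since `J` is finite this gives
`J^{1/r} ≤ 2^{1/p} c`, and the intervals `(α,β]` exhaust the relevant part of `(a,b)`. -/

open MeasureTheory Set ENNReal

noncomputable section

/-- The `μ`-essential supremum of `f` over `E`:
`‖f‖_{∞,E,μ} = sup {α : μ({y ∈ E : f y ≥ α}) > 0}`. -/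
def eSup (μ : Measure ℝ) (E : Set ℝ) (f : ℝ → ℝ≥0∞) : ℝ≥0∞ :=
  sSup {α : ℝ≥0∞ | 0 < μ {y | y ∈ E ∧ α ≤ f y}}

/-- `‖f‖_{p,E,μ}` for `0 < p ≤ ∞`. -/
def Nrm (p : ℝ≥0∞) (μ : Measure ℝ) (E : Set ℝ) (f : ℝ → ℝ≥0∞) : ℝ≥0∞ :=
  if p = ⊤ then eSup μ E f
  else (∫⁻ x in E, f x ^ p.toReal ∂μ) ^ (1 / p.toReal)

/-- `‖u(x) ‖g‖_{∞,(x,b),μ}‖_{q,(a,b),ν}`. -/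
def RHSsup (q : ℝ≥0∞) (a b : ℝ) (μ ν : Measure ℝ) (u g : ℝ → ℝ≥0∞) : ℝ≥0∞ :=
  Nrm q ν (Ioo a b) (fun x => u x * eSup μ (Ioo x b) g)

/-- The best constant in the inequality
`‖gw‖_{p,(a,b),μ} ≤ c ‖u(x) ‖g‖_{∞,(x,b),μ}‖_{q,(a,b),ν}` over all `g ∈ B⁺((a,b))`. -/
def bestC (p q : ℝ≥0∞) (a b : ℝ) (μ ν : Measure ℝ) (w u : ℝ → ℝ≥0∞) : ℝ≥0∞ :=
  sInf {c : ℝ≥0∞ | ∀ g : ℝ → ℝ≥0∞, Measurable g →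
    Nrm p μ (Ioo a b) (fun t => g t * w t) ≤ c * RHSsup q a b μ ν u g}

/-- `‖u‖_{q,(a,x+],ν} := lim_{s→x+} ‖u‖_{q,(a,s],ν}`; since `s ↦ ‖u‖_{q,(a,s],ν}` is
non-decreasing, the right limit at `x ∈ (a,b)` equals the infimum over `s ∈ (x,b)`. -/
def uNplus (q : ℝ≥0∞) (ν : Measure ℝ) (a b : ℝ) (u : ℝ → ℝ≥0∞) (x : ℝ) : ℝ≥0∞ :=
  ⨅ s ∈ Ioo x b, Nrm q ν (Ioc a s) u

/-! ### Cofinal sequences and measures of half-lines -/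

lemma exists_cofinal_seq {T : Set ℝ} (hT : T.Nonempty) :
    ∃ t : ℕ → ℝ, (∀ n, t n ∈ T) ∧ ∀ x ∈ T, ∃ n, x ≤ t n := by
  by_cases hb : BddAbove T
  · by_cases hmem : sSup T ∈ T
    · exact ⟨fun _ => sSup T, fun _ => hmem, fun x hx => ⟨0, le_csSup hb hx⟩⟩
    · obtain ⟨v, -, hv, hvT⟩ := exists_seq_tendsto_sSup hT hb
      refine ⟨v, hvT, fun x hx => ?_⟩
      have hlt : x < sSup T :=
        lt_of_le_of_ne (le_csSup hb hx) (fun h => hmem (h ▸ hx))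
      exact ((hv.eventually (lt_mem_nhds hlt)).exists).imp fun n hn => hn.le
  · have : ∀ n : ℕ, ∃ y ∈ T, (n : ℝ) < y := fun n => not_bddAbove_iff.1 hb n
    choose t ht ht' using this
    refine ⟨t, ht, fun x _ => ?_⟩
    obtain ⟨n, hn⟩ := exists_nat_gt x
    exact ⟨n, (hn.trans (ht' n)).le⟩

lemma exists_coinitial_seq {T : Set ℝ} (hT : T.Nonempty) :
    ∃ t : ℕ → ℝ, (∀ n, t n ∈ T) ∧ ∀ x ∈ T, ∃ n, t n ≤ x := by
  obtain ⟨t, h1, h2⟩ := exists_cofinal_seq (T := -T) hT.neg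
  refine ⟨fun n => -t n, fun n => h1 n, fun x hx => ?_⟩
  obtain ⟨n, hn⟩ := h2 (-x) (by simpa using hx)
  exact ⟨n, by linarith⟩

lemma measure_le_of_Iic {m : Measure ℝ} {T : Set ℝ} {B : ℝ≥0∞}
    (h : ∀ t ∈ T, m (Iic t) ≤ B) : m T ≤ B := by
  rcases T.eq_empty_or_nonempty with rfl | hT
  · simp
  obtain ⟨t, ht, hc⟩ := exists_cofinal_seq hT
  calc m T ≤ m (⋃ n, Iic (t n)) :=
        measure_mono fun x hx => mem_iUnion.2 (hc x hx)
    _ = ⨆ n, m (Iic (t n)) := by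
        refine Directed.measure_iUnion fun i j => ?_
        rcases le_total (t i) (t j) with hij | hij
        · exact ⟨j, Iic_subset_Iic.2 hij, subset_rfl⟩
        · exact ⟨i, subset_rfl, Iic_subset_Iic.2 hij⟩
    _ ≤ B := iSup_le fun n => h _ (ht n)

lemma measure_le_of_Ici {m : Measure ℝ} {T : Set ℝ} {B : ℝ≥0∞}
    (h : ∀ t ∈ T, m (Ici t) ≤ B) : m T ≤ B := by
  rcases T.eq_empty_or_nonempty with rfl | hT
  · simp
  obtain ⟨t, ht, hc⟩ := exists_coinitial_seq hT
  calc m T ≤ m (⋃ n, Ici (t n)) :=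
        measure_mono fun x hx => mem_iUnion.2 (hc x hx)
    _ = ⨆ n, m (Ici (t n)) := by
        refine Directed.measure_iUnion fun i j => ?_
        rcases le_total (t i) (t j) with hij | hij
        · exact ⟨i, subset_rfl, Ici_subset_Ici.2 hij⟩
        · exact ⟨j, Ici_subset_Ici.2 hij, subset_rfl⟩
    _ ≤ B := iSup_le fun n => h _ (ht n)

lemma sigmaFinite_of_cover {m : Measure ℝ} (S : ℕ → Set ℝ) (hS : ∀ n, m (S n) < ⊤)
    (hc : m (⋃ n, S n)ᶜ = 0) : SigmaFinite m := by
  refine ⟨⟨⟨fun n => S n ∪ (⋃ n, S n)ᶜ, fun _ => trivial, fun n => ?_, ?_⟩⟩⟩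
  · refine (measure_union_le _ _).trans_lt ?_
    rw [hc, add_zero]
    exact hS n
  · rw [← iUnion_union, union_compl_self]

lemma sigmaFinite_of_Iic {m : Measure ℝ} {T : Set ℝ} (hT : ∀ t ∈ T, m (Iic t) < ⊤)
    (hc : m Tᶜ = 0) : SigmaFinite m := by
  rcases T.eq_empty_or_nonempty with rfl | hne
  · exact sigmaFinite_of_cover (fun _ => ∅) (by simp) (by simpa using hc)
  obtain ⟨t, ht, hcof⟩ := exists_cofinal_seq hne
  refine sigmaFinite_of_cover (fun n => Iic (t n)) (fun n => hT _ (ht n)) ?_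
  exact measure_mono_null (compl_subset_compl.2 fun x hx => mem_iUnion.2 (hcof x hx)) hc

lemma sigmaFinite_of_Ici {m : Measure ℝ} {T : Set ℝ} (hT : ∀ t ∈ T, m (Ici t) < ⊤)
    (hc : m Tᶜ = 0) : SigmaFinite m := by
  rcases T.eq_empty_or_nonempty with rfl | hne
  · exact sigmaFinite_of_cover (fun _ => ∅) (by simp) (by simpa using hc)
  obtain ⟨t, ht, hcof⟩ := exists_coinitial_seq hne
  refine sigmaFinite_of_cover (fun n => Ici (t n)) (fun n => hT _ (ht n)) ?_
  exact measure_mono_null (compl_subset_compl.2 fun x hx => mem_iUnion.2 (hcof x hx)) hc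

/-! ### Comparison of integrals through distribution functions -/

/-- If every superlevel set of `f₁` has no larger measure than that of `f₂`, the same holds for
the integrals; this is the layer-cake formula, applied to the truncations `min fᵢ n`. -/
lemma lintegral_le_of_meas_lt {m₁ m₂ : Measure ℝ} {f₁ f₂ : ℝ → ℝ≥0∞}
    (h₁ : Measurable f₁) (h₂ : Measurable f₂)
    (h : ∀ s : ℝ≥0∞, s < ⊤ → m₁ {x | s < f₁ x} ≤ m₂ {x | s < f₂ x}) :
    ∫⁻ x, f₁ x ∂m₁ ≤ ∫⁻ x, f₂ x ∂m₂ := by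
  have layer : ∀ (m : Measure ℝ) (f : ℝ → ℝ≥0∞),
      Measurable f → ∀ n : ℕ, ∫⁻ x, min (f x) n ∂m
        = ∫⁻ t in Ioi (0 : ℝ), m {x | ENNReal.ofReal t < min (f x) n} := by
    intro m f hf n
    have hfin : ∀ x, min (f x) (n : ℝ≥0∞) ≠ ⊤ := fun x =>
      ((min_le_right _ _).trans_lt (ENNReal.natCast_lt_top n)).ne
    have hm : Measurable fun x => min (f x) (n : ℝ≥0∞) := hf.min measurable_const
    have := lintegral_eq_lintegral_meas_lt m (f := fun x => (min (f x) (n : ℝ≥0∞)).toReal)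
      (Filter.Eventually.of_forall fun x => ENNReal.toReal_nonneg) hm.ennreal_toReal.aemeasurable
    simp only [ENNReal.ofReal_toReal (hfin _)] at this
    rw [this]
    refine setLIntegral_congr_fun measurableSet_Ioi fun t ht => ?_
    congr 1
    ext x
    exact (ENNReal.ofReal_lt_iff_lt_toReal (le_of_lt ht) (hfin x)).symm
  have key : ∀ n : ℕ, ∫⁻ x, min (f₁ x) n ∂m₁ ≤ ∫⁻ x, f₂ x ∂m₂ := by
    intro n
    calc ∫⁻ x, min (f₁ x) n ∂m₁ ≤ ∫⁻ x, min (f₂ x) n ∂m₂ := by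
          rw [layer m₁ f₁ h₁, layer m₂ f₂ h₂]
          refine lintegral_mono fun t => ?_
          simp only [lt_min_iff]
          by_cases ht : ENNReal.ofReal t < n
          · simpa [ht] using h _ ENNReal.ofReal_lt_top
          · simp [ht]
      _ ≤ _ := lintegral_mono fun x => min_le_left _ _
  have hsup : ∀ x, f₁ x = ⨆ n : ℕ, min (f₁ x) n := by
    intro x
    refine le_antisymm ?_ (iSup_le fun n => min_le_left _ _)
    refine le_of_forall_lt fun c hc => ?_
    obtain ⟨n, hn⟩ := ENNReal.exists_nat_gt (hc.trans_le le_top).ne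
    exact (lt_min hc hn).trans_le (le_iSup (fun n : ℕ => min (f₁ x) (n : ℝ≥0∞)) n)
  rw [lintegral_congr hsup, lintegral_iSup (fun n => h₁.min measurable_const)
    (fun i j hij x => min_le_min le_rfl (by exact_mod_cast hij))]
  exact iSup_le key

lemma lintegral_ofReal_rpow_neg_half {M : ℝ} (hM : 0 ≤ M) :
    ∫⁻ x in Ioo 0 M, ENNReal.ofReal x ^ (-(1 / 2) : ℝ) = 2 * ENNReal.ofReal M ^ (1 / 2 : ℝ) := by
  have h1 : ∫⁻ x in Ioo 0 M, ENNReal.ofReal x ^ (-(1 / 2) : ℝ)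
      = ∫⁻ x in Ioc 0 M, ENNReal.ofReal (x ^ (-(1 / 2) : ℝ)) := by
    rw [restrict_Ioo_eq_restrict_Ioc]
    refine setLIntegral_congr_fun measurableSet_Ioc fun x hx => ?_
    exact ENNReal.ofReal_rpow_of_pos hx.1
  rw [h1, ← ofReal_integral_eq_lintegral_ofReal, ← intervalIntegral.integral_of_le hM,
    integral_rpow (by left; norm_num), ENNReal.ofReal_rpow_of_nonneg hM (by norm_num)]
  · rw [show (2 : ℝ≥0∞) = ENNReal.ofReal 2 by simp, ← ENNReal.ofReal_mul (by norm_num)]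
    congr 1
    rw [Real.zero_rpow (by norm_num)]
    norm_num
    ring
  · exact (intervalIntegrable_iff_integrableOn_Ioc_of_le hM).1
      (intervalIntegral.intervalIntegrable_rpow' (by norm_num))
  · filter_upwards [ae_restrict_mem measurableSet_Ioc] with x hx
    exact Real.rpow_nonneg hx.1.le _

/-- If `N` is at least as spread out under `m` as the uniform variable on `(0, m univ)`, then
`∫ N^{-1/2} dm` is at most `∫_0^{m univ} x^{-1/2} dx = 2 (m univ)^{1/2}`. -/
lemma lintegral_rpow_neg_half_le {m : Measure ℝ} [IsFiniteMeasure m] {N : ℝ → ℝ≥0∞}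
    (hN : Measurable N) (h : ∀ s, m {x | N x < s} ≤ s) :
    ∫⁻ x, N x ^ (-(1 / 2) : ℝ) ∂m ≤ 2 * m univ ^ (1 / 2 : ℝ) := by
  set M := (m univ).toReal with hMdef
  have hM : ENNReal.ofReal M = m univ := ENNReal.ofReal_toReal (measure_ne_top _ _)
  rw [← hM, ← lintegral_ofReal_rpow_neg_half ENNReal.toReal_nonneg]
  refine lintegral_le_of_meas_lt (hN.pow_const _) (by fun_prop) fun s hs => ?_
  -- `s < y ^ (-1/2)` means `y < s ^ (-2)`
  have key : ∀ y : ℝ≥0∞, s < y ^ (-(1 / 2) : ℝ) ↔ y < s ^ (-2 : ℝ) := by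
    intro y
    rw [show (-(1 / 2) : ℝ) = (-2 : ℝ)⁻¹ by norm_num]
    constructor
    · intro hlt
      have := ENNReal.rpow_lt_rpow hlt (z := 2) (by norm_num)
      have h2 := ENNReal.inv_lt_inv.2 this
      rwa [← ENNReal.rpow_mul, ← ENNReal.rpow_neg, ← ENNReal.rpow_neg,
        show -((-2 : ℝ)⁻¹ * 2) = 1 by norm_num, ENNReal.rpow_one] at h2
    · intro hlt
      have := ENNReal.rpow_lt_rpow hlt (z := 1 / 2) (by norm_num)
      have h2 := ENNReal.inv_lt_inv.2 this
      rw [← ENNReal.rpow_mul, ← ENNReal.rpow_neg, ← ENNReal.rpow_neg,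
        show -((-2 : ℝ) * (1 / 2)) = 1 by norm_num, ENNReal.rpow_one] at h2
      rwa [show (-2 : ℝ)⁻¹ = -(1 / 2) by norm_num]
  simp only [key]
  set σ := s ^ (-2 : ℝ)
  have h1 : m {x | N x < σ} ≤ min σ (m univ) := le_min (h σ) (measure_mono (subset_univ _))
  refine h1.trans ?_
  have hfin : min σ (m univ) ≠ ⊤ := ((min_le_right _ _).trans_lt (measure_lt_top _ _)).ne
  calc min σ (m univ) = volume (Ioo 0 (min σ (m univ)).toReal) := by
        rw [Real.volume_Ioo, sub_zero, ENNReal.ofReal_toReal hfin]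
    _ ≤ _ := by
        rw [Measure.restrict_apply' measurableSet_Ioo]
        refine measure_mono fun x hx => ⟨?_, hx.1, hx.2.trans_le ?_⟩
        · exact ((ENNReal.ofReal_lt_iff_lt_toReal hx.1.le hfin).2 hx.2).trans_le (min_le_left _ _)
        · exact ENNReal.toReal_mono (measure_ne_top _ _) (min_le_right _ _)

lemma lintegral_Iic_rpow_neg_half_le (m : Measure ℝ) [IsFiniteMeasure m] :
    ∫⁻ x, m (Iic x) ^ (-(1 / 2) : ℝ) ∂m ≤ 2 * m univ ^ (1 / 2 : ℝ) := by
  have hmono : Monotone fun x => m (Iic x) := fun x y hxy => measure_mono (Iic_subset_Iic.2 hxy)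
  exact lintegral_rpow_neg_half_le hmono.measurable fun s => measure_le_of_Iic fun t ht => le_of_lt ht

lemma lintegral_Ici_rpow_neg_half_le (m : Measure ℝ) [IsFiniteMeasure m] :
    ∫⁻ x, m (Ici x) ^ (-(1 / 2) : ℝ) ∂m ≤ 2 * m univ ^ (1 / 2 : ℝ) := by
  have hmono : Antitone fun x => m (Ici x) := fun x y hxy => measure_mono (Ici_subset_Ici.2 hxy)
  exact lintegral_rpow_neg_half_le hmono.measurable fun s => measure_le_of_Ici fun t ht => le_of_lt ht

/-! ### The essential supremum and the functionals `Nrm` -/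

lemma eSup_le_iff {μ : Measure ℝ} {E : Set ℝ} {f : ℝ → ℝ≥0∞} {M : ℝ≥0∞} :
    eSup μ E f ≤ M ↔ μ {y | y ∈ E ∧ M < f y} = 0 := by
  constructor
  · intro h
    rcases eq_or_ne M ⊤ with rfl | hM
    · simp
    obtain ⟨v, -, hv, hvt⟩ := exists_seq_strictAnti_tendsto' hM.lt_top
    refine measure_mono_null (t := ⋃ n, {y | y ∈ E ∧ v n ≤ f y}) ?_ ?_
    · rintro y ⟨hy, hlt⟩
      obtain ⟨n, hn⟩ := (hvt.eventually (gt_mem_nhds hlt)).exists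
      exact mem_iUnion.2 ⟨n, hy, hn.le⟩
    · refine measure_iUnion_null fun n => ?_
      by_contra hne
      have hle : v n ≤ eSup μ E f := le_sSup (pos_iff_ne_zero.2 hne)
      exact absurd (hle.trans h) (not_le.2 (hv n).1)
  · intro h
    refine sSup_le fun α hα => ?_
    by_contra! hlt
    refine (ne_of_gt hα) (measure_mono_null ?_ h)
    rintro y ⟨hy, hle⟩
    exact ⟨hy, hlt.trans_le hle⟩

lemma eSup_le_of_forall {μ : Measure ℝ} {E : Set ℝ} {f : ℝ → ℝ≥0∞} {M : ℝ≥0∞}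
    (h : ∀ x ∈ E, f x ≤ M) : eSup μ E f ≤ M := by
  rw [eSup_le_iff]
  convert measure_empty (μ := μ)
  ext y
  simpa using h y

lemma measure_eSup_lt (μ : Measure ℝ) (E : Set ℝ) (f : ℝ → ℝ≥0∞) :
    μ {y | y ∈ E ∧ eSup μ E f < f y} = 0 := eSup_le_iff.1 le_rfl

lemma eSup_mono {μ : Measure ℝ} {E F : Set ℝ} (hEF : E ⊆ F) {f g : ℝ → ℝ≥0∞}
    (hfg : ∀ x ∈ E, f x ≤ g x) : eSup μ E f ≤ eSup μ F g := by
  rw [eSup_le_iff]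
  refine measure_mono_null ?_ (measure_eSup_lt μ F g)
  rintro y ⟨hy, hlt⟩
  exact ⟨hEF hy, hlt.trans_le (hfg y hy)⟩

lemma eSup_Ioo_antitone (μ : Measure ℝ) (b : ℝ) (g : ℝ → ℝ≥0∞) :
    Antitone fun x => eSup μ (Ioo x b) g := fun _ _ hxy =>
  eSup_mono (Ioo_subset_Ioo_left hxy) fun _ _ => le_rfl

lemma Nrm_top (μ : Measure ℝ) (E : Set ℝ) (f : ℝ → ℝ≥0∞) : Nrm ⊤ μ E f = eSup μ E f := if_pos rfl

lemma Nrm_of_ne_top {p : ℝ≥0∞} (hp : p ≠ ⊤) (μ : Measure ℝ) (E : Set ℝ) (f : ℝ → ℝ≥0∞) :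
    Nrm p μ E f = (∫⁻ x in E, f x ^ p.toReal ∂μ) ^ (1 / p.toReal) := if_neg hp

lemma Nrm_rpow {p : ℝ≥0∞} (hp0 : p ≠ 0) (hp : p ≠ ⊤) (μ : Measure ℝ) (E : Set ℝ)
    (f : ℝ → ℝ≥0∞) : Nrm p μ E f ^ p.toReal = ∫⁻ x in E, f x ^ p.toReal ∂μ := by
  rw [Nrm_of_ne_top hp, ← ENNReal.rpow_mul,
    one_div_mul_cancel (ENNReal.toReal_pos hp0 hp).ne', ENNReal.rpow_one]

lemma Nrm_mono {q : ℝ≥0∞} {μ : Measure ℝ} {E F : Set ℝ} (hE : MeasurableSet E) (hEF : E ⊆ F)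
    {f g : ℝ → ℝ≥0∞} (hfg : ∀ x ∈ E, f x ≤ g x) : Nrm q μ E f ≤ Nrm q μ F g := by
  rcases eq_or_ne q ⊤ with rfl | hq
  · simpa only [Nrm_top] using eSup_mono hEF hfg
  · rw [Nrm_of_ne_top hq, Nrm_of_ne_top hq]
    refine ENNReal.rpow_le_rpow ?_ (by positivity)
    exact (setLIntegral_mono' hE fun x hx =>
      ENNReal.rpow_le_rpow (hfg x hx) ENNReal.toReal_nonneg).trans (lintegral_mono_set hEF)

lemma Nrm_empty {q : ℝ≥0∞} (hq0 : q ≠ 0) (μ : Measure ℝ) (f : ℝ → ℝ≥0∞) : Nrm q μ ∅ f = 0 := by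
  rcases eq_or_ne q ⊤ with rfl | hq
  · rw [Nrm_top]
    simp [eSup]
  · rw [Nrm_of_ne_top hq]
    simp [ENNReal.toReal_pos hq0 hq]

lemma Ioo_eq_iUnion_Ioc {a t : ℝ} {v : ℕ → ℝ} (hv : ∀ n, v n ∈ Ioo a t)
    (hc : ∀ x ∈ Ioo a t, ∃ n, x ≤ v n) : Ioo a t = ⋃ n, Ioc a (v n) := by
  ext x
  simp only [mem_iUnion]
  exact ⟨fun hx => (hc x hx).imp fun n hn => ⟨hx.1, hn⟩,
    fun ⟨n, hn⟩ => ⟨hn.1, hn.2.trans_lt (hv n).2⟩⟩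

lemma directed_Ioc (a : ℝ) (v : ℕ → ℝ) : Directed (· ⊆ ·) fun n => Ioc a (v n) := by
  intro i j
  rcases le_total (v i) (v j) with hij | hij
  · exact ⟨j, Ioc_subset_Ioc_right hij, subset_rfl⟩
  · exact ⟨i, subset_rfl, Ioc_subset_Ioc_right hij⟩

/-- Continuity from below of `s ↦ ‖u‖_{q,(a,s],ν}`. -/
lemma Nrm_Ioo_le {q : ℝ≥0∞} (hq0 : q ≠ 0) {ν : Measure ℝ} {u : ℝ → ℝ≥0∞} {a t : ℝ} {M : ℝ≥0∞}
    (h : ∀ s ∈ Ioo a t, Nrm q ν (Ioc a s) u ≤ M) : Nrm q ν (Ioo a t) u ≤ M := by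
  rcases (Ioo a t).eq_empty_or_nonempty with he | hne
  · rw [he, Nrm_empty hq0]
    exact zero_le
  obtain ⟨v, hv, hc⟩ := exists_cofinal_seq hne
  have hU := Ioo_eq_iUnion_Ioc hv hc
  rcases eq_or_ne q ⊤ with rfl | hq
  · rw [Nrm_top, eSup_le_iff]
    refine measure_mono_null (t := ⋃ n, {y | y ∈ Ioc a (v n) ∧ M < u y}) ?_ ?_
    · rintro y ⟨hy, hlt⟩
      rw [hU] at hy
      obtain ⟨n, hn⟩ := mem_iUnion.1 hy
      exact mem_iUnion.2 ⟨n, hn, hlt⟩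
    · refine measure_iUnion_null fun n => eSup_le_iff.1 ?_
      simpa only [Nrm_top] using h _ (hv n)
  · have hQ := ENNReal.toReal_pos hq0 hq
    rw [Nrm_of_ne_top hq, hU, setLIntegral_iUnion_of_directed _ (directed_Ioc a v), one_div,
      ENNReal.rpow_inv_le_iff hQ]
    refine iSup_le fun n => ?_
    rw [← Nrm_rpow hq0 hq]
    exact ENNReal.rpow_le_rpow (h _ (hv n)) hQ.le

lemma measure_Ioo_le {m : Measure ℝ} {a t : ℝ} {M : ℝ≥0∞}
    (h : ∀ s ∈ Ioo a t, m (Ioc a s) ≤ M) : m (Ioo a t) ≤ M := by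
  rcases (Ioo a t).eq_empty_or_nonempty with he | hne
  · simp [he]
  obtain ⟨v, hv, hc⟩ := exists_cofinal_seq hne
  rw [Ioo_eq_iUnion_Ioc hv hc, (directed_Ioc a v).measure_iUnion]
  exact iSup_le fun n => h _ (hv n)

/-! ### The one-sided limits of `‖u‖_{q,(a,x],ν}` -/

lemma Nrm_Ioo_monotone (q : ℝ≥0∞) (ν : Measure ℝ) (a : ℝ) (u : ℝ → ℝ≥0∞) :
    Monotone fun t => Nrm q ν (Ioo a t) u := fun _ _ hst =>
  Nrm_mono measurableSet_Ioo (Ioo_subset_Ioo_right hst) fun _ _ => le_rfl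

lemma uNplus_le {q : ℝ≥0∞} {ν : Measure ℝ} {a b : ℝ} {u : ℝ → ℝ≥0∞} {s t : ℝ}
    (hst : s < t) (htb : t ≤ b) : uNplus q ν a b u s ≤ Nrm q ν (Ioo a t) u := by
  obtain ⟨y, hy⟩ := exists_between hst
  refine (iInf₂_le y (show y ∈ Ioo s b from ⟨hy.1, hy.2.trans_le htb⟩)).trans ?_
  have hsub : Ioc a y ⊆ Ioo a t := fun x hx => ⟨hx.1, hx.2.trans_lt hy.2⟩
  exact Nrm_mono measurableSet_Ioc hsub fun _ _ => le_rfl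

lemma le_uNplus {q : ℝ≥0∞} {ν : Measure ℝ} {a b : ℝ} {u : ℝ → ℝ≥0∞} (x : ℝ) :
    Nrm q ν (Ioc a x) u ≤ uNplus q ν a b u x :=
  le_iInf₂ fun _ hs => Nrm_mono measurableSet_Ioc (Ioc_subset_Ioc_right hs.1.le) fun _ _ => le_rfl

lemma Nrm_Ioo_le_of_uNplus {q : ℝ≥0∞} (hq0 : q ≠ 0) {ν : Measure ℝ} {u : ℝ → ℝ≥0∞} {a b t : ℝ}
    {M : ℝ≥0∞} (h : ∀ s ∈ Ioo a t, uNplus q ν a b u s ≤ M) : Nrm q ν (Ioo a t) u ≤ M :=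
  Nrm_Ioo_le hq0 fun s hs => (le_uNplus s).trans (h s hs)

/-! ### The measure of half-lines under the Stieltjes measure -/

section Stieltjes

variable {q : ℝ≥0∞} {ν : Measure ℝ} {a b R : ℝ} {u : ℝ → ℝ≥0∞} {lam : Measure ℝ}

lemma lam_Ioo_le
    (hlam : ∀ α β : ℝ, a < α → α ≤ β → β < b → lam (Ioc α β) =
      (uNplus q ν a b u α ^ R)⁻¹ - (uNplus q ν a b u β ^ R)⁻¹) {x : ℝ} (hx : a < x) :
    lam (Ioo x b) ≤ (uNplus q ν a b u x ^ R)⁻¹ :=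
  measure_Ioo_le fun s hs => by
    rw [hlam x s hx hs.1.le hs.2]
    exact tsub_le_self

/-- `λ([y,b)) ≤ ‖u‖_{q,(a,y),ν}^{-r}`. -/
lemma lam_Ico_le (hq0 : q ≠ 0) (hR : 0 < R)
    (hlam : ∀ α β : ℝ, a < α → α ≤ β → β < b → lam (Ioc α β) =
      (uNplus q ν a b u α ^ R)⁻¹ - (uNplus q ν a b u β ^ R)⁻¹) {y : ℝ} :
    lam (Ico y b) ≤ (Nrm q ν (Ioo a y) u ^ R)⁻¹ := by
  rw [ENNReal.le_inv_iff_le_inv, ← ENNReal.le_rpow_inv_iff hR]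
  refine Nrm_Ioo_le_of_uNplus (b := b) hq0 fun s hs => ?_
  rw [ENNReal.le_rpow_inv_iff hR, ENNReal.le_inv_iff_le_inv]
  have hsub : Ico y b ⊆ Ioo s b := fun x hx => ⟨hs.2.trans_le hx.1, hx.2⟩
  exact (measure_mono hsub).trans (lam_Ioo_le hlam hs.1)

/-- `‖u‖_{q,(a,t),ν}^{-r} ≤ λ([t,b)) + ‖u‖_{q,(a,b),ν}^{-r}`. The degenerate case in which `u`
vanishes on `(a,t)` is included: then `λ([t,b)) = ∞` or `‖u‖_{q,(a,b),ν} = 0`. -/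
lemma inv_le_lam_Ico_add (hq0 : q ≠ 0) (hR : 0 < R)
    (hlam : ∀ α β : ℝ, a < α → α ≤ β → β < b → lam (Ioc α β) =
      (uNplus q ν a b u α ^ R)⁻¹ - (uNplus q ν a b u β ^ R)⁻¹) {t : ℝ} (hat : a < t)
    (htb : t < b) :
    (Nrm q ν (Ioo a t) u ^ R)⁻¹ ≤ lam (Ico t b) + (Nrm q ν (Ioo a b) u ^ R)⁻¹ := by
  -- first replace the endpoint `b` by an interior point `x`
  have key : ∀ x, t ≤ x → x < b →
      (Nrm q ν (Ioo a t) u ^ R)⁻¹ ≤ lam (Icc t x) + (uNplus q ν a b u x ^ R)⁻¹ := by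
    intro x htx hxb
    have h1 : ∀ s ∈ Ioo a t, (Nrm q ν (Ioo a t) u ^ R)⁻¹ ≤
        lam (Ioc s x) + (uNplus q ν a b u x ^ R)⁻¹ := by
      intro s hs
      rw [hlam s x hs.1 (hs.2.le.trans htx) hxb]
      refine le_trans ?_ le_tsub_add
      exact ENNReal.inv_le_inv.2 (ENNReal.rpow_le_rpow (uNplus_le hs.2 htb.le) hR.le)
    by_cases h0 : ∃ s ∈ Ioo a t, uNplus q ν a b u s ≠ 0
    · obtain ⟨s, hs, hs0⟩ := h0
      obtain ⟨v, hvm, hv, hvt⟩ := exists_seq_strictMono_tendsto' hs.2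
      have hinter : Icc t x = ⋂ n, Ioc (v n) x := by
        ext y
        simp only [mem_iInter, mem_Icc, mem_Ioc]
        constructor
        · intro hy n
          exact ⟨(hv n).2.trans_le hy.1, hy.2⟩
        · intro hy
          exact ⟨le_of_tendsto' hvt fun n => (hy n).1.le, (hy 0).2⟩
      have hfin : lam (Ioc (v 0) x) ≠ ⊤ := by
        refine ne_top_of_le_ne_top ?_ (measure_mono (Ioc_subset_Ioc_left (hv 0).1.le))
        rw [hlam s x hs.1 (hs.2.le.trans htx) hxb]
        refine (tsub_le_self.trans_lt ?_).ne
        rw [ENNReal.inv_lt_top]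
        exact ENNReal.rpow_pos_of_nonneg (pos_iff_ne_zero.2 hs0) hR.le
      rw [hinter, Antitone.measure_iInter (fun i j hij => Ioc_subset_Ioc_left (hvm.monotone hij))
        (fun n => measurableSet_Ioc.nullMeasurableSet) ⟨0, hfin⟩, ENNReal.iInf_add]
      exact le_iInf fun n => h1 _ ⟨hs.1.trans (hv n).1, (hv n).2⟩
    · push Not at h0
      obtain ⟨s, hs⟩ := exists_between hat
      have hz : lam (Ioo s t) = 0 := by
        refine le_antisymm (measure_Ioo_le fun y hy => ?_) zero_le
        rw [hlam s y hs.1 hy.1.le (hy.2.trans htb), h0 s hs, h0 y ⟨hs.1.trans hy.1, hy.2⟩, tsub_self]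
      refine (h1 s hs).trans (add_le_add_left ?_ _)
      have hsub : Ioc s x ⊆ Ioo s t ∪ Icc t x := by
        intro y hy
        rcases lt_or_ge y t with hyt | hyt
        · exact Or.inl ⟨hy.1, hyt⟩
        · exact Or.inr ⟨hyt, hy.2⟩
      refine (measure_mono hsub).trans ((measure_union_le _ _).trans ?_)
      rw [hz, zero_add]
  have key2 : ∀ x ∈ Ioo a b, (Nrm q ν (Ioo a t) u ^ R)⁻¹ - lam (Ico t b) ≤
      (uNplus q ν a b u x ^ R)⁻¹ := by
    intro x hx
    have hm : x ≤ max x t := le_max_left _ _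
    have hmb : max x t < b := max_lt hx.2 htb
    rw [tsub_le_iff_left]
    refine (key _ (le_max_right x t) hmb).trans (add_le_add ?_ ?_)
    · exact measure_mono fun y hy => ⟨hy.1, hy.2.trans_lt hmb⟩
    · refine ENNReal.inv_le_inv.2 (ENNReal.rpow_le_rpow ?_ hR.le)
      refine le_iInf₂ fun s hs => iInf₂_le s ⟨hm.trans_lt hs.1, hs.2⟩
  rw [← tsub_le_iff_left, ENNReal.le_inv_iff_le_inv, ← ENNReal.le_rpow_inv_iff hR]
  refine Nrm_Ioo_le_of_uNplus (b := b) hq0 fun s hs => ?_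
  rw [ENNReal.le_rpow_inv_iff hR, ENNReal.le_inv_iff_le_inv]
  exact key2 s hs

end Stieltjes

/-! ### Tonelli on a sub-region of the plane -/

lemma lintegral_region_swap {m₁ m₂ : Measure ℝ} [SFinite m₁] [SFinite m₂] {S : Set (ℝ × ℝ)}
    (hS : MeasurableSet S) {k₁ k₂ : ℝ → ℝ≥0∞} (h₁ : Measurable k₁) (h₂ : Measurable k₂) :
    ∫⁻ x, k₁ x * ∫⁻ y in {y | (x, y) ∈ S}, k₂ y ∂m₂ ∂m₁
      = ∫⁻ y, k₂ y * ∫⁻ x in {x | (x, y) ∈ S}, k₁ x ∂m₁ ∂m₂ := by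
  have hx : ∀ x, MeasurableSet {y | (x, y) ∈ S} := fun x => measurable_prodMk_left hS
  have hy : ∀ y, MeasurableSet {x | (x, y) ∈ S} := fun y => measurable_prodMk_right hS
  have hF : Measurable (Function.uncurry fun x y =>
      S.indicator (fun z : ℝ × ℝ => k₁ z.1 * k₂ z.2) (x, y)) :=
    ((h₁.comp measurable_fst).mul (h₂.comp measurable_snd)).indicator hS
  have e1 : ∀ x, k₁ x * ∫⁻ y in {y | (x, y) ∈ S}, k₂ y ∂m₂
      = ∫⁻ y, S.indicator (fun z : ℝ × ℝ => k₁ z.1 * k₂ z.2) (x, y) ∂m₂ := by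
    intro x
    rw [← lintegral_indicator (hx x), ← lintegral_const_mul _ (h₂.indicator (hx x))]
    refine lintegral_congr fun y => ?_
    by_cases h : (x, y) ∈ S <;> simp [indicator, h]
  have e2 : ∀ y, k₂ y * ∫⁻ x in {x | (x, y) ∈ S}, k₁ x ∂m₁
      = ∫⁻ x, S.indicator (fun z : ℝ × ℝ => k₁ z.1 * k₂ z.2) (x, y) ∂m₁ := by
    intro y
    rw [← lintegral_indicator (hy y), ← lintegral_const_mul _ (h₁.indicator (hy y))]
    refine lintegral_congr fun x => ?_
    by_cases h : (x, y) ∈ S <;> simp [indicator, h, mul_comm]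
  rw [lintegral_congr e1, lintegral_congr e2]
  exact lintegral_lintegral_swap hF.aemeasurable

lemma lintegral_lintegral_Ici {W L : Measure ℝ} [SFinite W] [SFinite L] {k : ℝ → ℝ≥0∞}
    (hk : Measurable k) :
    ∫⁻ t, ∫⁻ x in Ici t, k x ∂L ∂W = ∫⁻ x, k x * W (Iic x) ∂L := by
  have := lintegral_region_swap (m₁ := W) (m₂ := L) (S := {z | z.1 ≤ z.2})
    (measurableSet_le measurable_fst measurable_snd) (k₁ := fun _ => 1) measurable_const hk
  simpa [Ici_def, Iic_def] using this

/-! ### Sufficiency -/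

lemma measurable_measure_Iic (W : Measure ℝ) : Measurable fun x => W (Iic x) :=
  Monotone.measurable fun _ _ h => measure_mono (Iic_subset_Iic.2 h)

/-- The weight used with Hölder's inequality: `Φ(t) = ∫_{[t,b)} D^ρ dλ + D(b)^ρ h`, where
`D(x) = W((a,x])` and the integral extends only over the points with `Um ≠ 0`, near which `λ` is
finite. By Tonelli, `∫ Φ dW` is at most `∫ D^{ρ+1} dλ + D(b)^{ρ+1} h`, while
monotonicity of `D` gives the pointwise lower bound. -/
lemma exists_weight {W L : Measure ℝ} {a b ρ R : ℝ} {Um : ℝ → ℝ≥0∞} {h J : ℝ≥0∞}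
    (hUm : Monotone Um) (hρ : 0 ≤ ρ) (hR : 0 < R)
    (hW : W (Ioo a b)ᶜ = 0) (hL : L (Ioo a b)ᶜ = 0)
    (hUfin : ∀ t ∈ Ioo a b, Um t < ⊤)
    (h1 : ∀ t ∈ Ioo a b, (Um t ^ R)⁻¹ ≤ L (Ici t) + h)
    (h2 : ∀ t ∈ Ioo a b, L (Ici t) ≤ (Um t ^ R)⁻¹)
    (hJ : ∫⁻ x, W (Iic x) ^ (ρ + 1) ∂L + W univ ^ (ρ + 1) * h ≤ J) (hJtop : J < ⊤) :
    (∀ t ∈ Ioo a b, W (Iic t) < ⊤) ∧ (∀ t ∈ Ioo a b, Um t = 0 → W (Iic t) = 0) ∧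
    ∃ Φ : ℝ → ℝ≥0∞, Antitone Φ ∧ ∫⁻ t, Φ t ∂W ≤ J ∧
      ∀ t ∈ Ioo a b, Um t ≠ 0 → W (Iic t) ^ ρ * (Um t ^ R)⁻¹ ≤ Φ t := by
  have hDmono : Monotone fun x => W (Iic x) := fun _ _ h => measure_mono (Iic_subset_Iic.2 h)
  have hDm := measurable_measure_Iic W
  have hρ1 : 0 < ρ + 1 := by linarith
  have claim : ∀ t ∈ Ioo a b, W (Iic t) ^ (ρ + 1) * (Um t ^ R)⁻¹ ≤ J := by
    intro t ht
    refine le_trans ?_ hJ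
    calc W (Iic t) ^ (ρ + 1) * (Um t ^ R)⁻¹
        ≤ W (Iic t) ^ (ρ + 1) * L (Ici t) + W (Iic t) ^ (ρ + 1) * h := by
          rw [← mul_add]
          gcongr
          exact h1 t ht
      _ ≤ _ := by
          gcongr
          · rw [← setLIntegral_const]
            refine (setLIntegral_mono' measurableSet_Ici fun x hx => ?_).trans
              (setLIntegral_le_lintegral (Ici t) _)
            exact ENNReal.rpow_le_rpow (hDmono hx) hρ1.le
          · exact subset_univ _
  have hUinv : ∀ t ∈ Ioo a b, (Um t ^ R)⁻¹ ≠ 0 := fun t ht =>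
    ENNReal.inv_ne_zero.2 (ENNReal.rpow_lt_top_of_nonneg hR.le (hUfin t ht).ne).ne
  have hfin : ∀ t ∈ Ioo a b, W (Iic t) < ⊤ := by
    intro t ht
    by_contra hne
    have hc := claim t ht
    rw [not_lt_top_iff.1 hne, ENNReal.top_rpow_of_pos hρ1, ENNReal.top_mul (hUinv t ht)] at hc
    exact absurd hJtop (not_lt.2 hc)
  have hzero : ∀ t ∈ Ioo a b, Um t = 0 → W (Iic t) = 0 := by
    intro t ht h0
    by_contra hne
    have hc := claim t ht
    rw [h0, ENNReal.zero_rpow_of_pos hR, ENNReal.inv_zero, ENNReal.mul_top] at hc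
    · exact absurd hJtop (not_lt.2 hc)
    · simp [hne, hρ1.le]
  refine ⟨hfin, hzero, ?_⟩
  -- restricting `L` to `{Um ≠ 0}` makes it σ-finite
  have hSm : MeasurableSet {x | Um x ≠ 0} := hUm.measurable (measurableSet_singleton 0).compl
  set L' := L.restrict {x | Um x ≠ 0} with hL'
  have hWs : SigmaFinite W := sigmaFinite_of_Iic hfin hW
  have hLs : SigmaFinite L' := by
    refine sigmaFinite_of_Ici (T := Ioo a b ∩ {x | Um x ≠ 0}) (fun t ht => ?_) ?_
    · refine (Measure.restrict_apply_le _ _).trans_lt ((h2 t ht.1).trans_lt ?_)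
      rw [ENNReal.inv_lt_top]
      exact ENNReal.rpow_pos_of_nonneg (pos_iff_ne_zero.2 ht.2) hR.le
    · rw [Measure.restrict_apply' hSm]
      refine measure_mono_null ?_ hL
      rintro x ⟨hx, hx2⟩ hx3
      exact hx ⟨hx3, hx2⟩
  refine ⟨fun t => ∫⁻ x in Ici t, W (Iic x) ^ ρ ∂L' + W univ ^ ρ * h, ?_, ?_, ?_⟩
  · intro s t hst
    exact add_le_add_left (lintegral_mono_set (Ici_subset_Ici.2 hst)) _
  · refine le_trans ?_ hJ
    rw [lintegral_add_right _ measurable_const, lintegral_lintegral_Ici (hDm.pow_const ρ),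
      lintegral_const]
    have e : ∀ y : ℝ≥0∞, y ^ (ρ + 1) = y ^ ρ * y := fun y => by
      rw [ENNReal.rpow_add_of_nonneg _ _ hρ zero_le_one, ENNReal.rpow_one]
    simp only [e]
    refine add_le_add ?_ (by rw [mul_right_comm])
    exact lintegral_mono' Measure.restrict_le_self le_rfl
  · intro t ht hne
    have hLt : L' (Ici t) = L (Ici t) := by
      rw [Measure.restrict_apply' hSm, inter_eq_left.2]
      intro x hx
      exact (pos_iff_ne_zero.2 hne |>.trans_le (hUm hx)).ne'
    calc W (Iic t) ^ ρ * (Um t ^ R)⁻¹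
        ≤ W (Iic t) ^ ρ * L' (Ici t) + W (Iic t) ^ ρ * h := by
          rw [← mul_add, hLt]
          gcongr
          exact h1 t ht
      _ ≤ ∫⁻ x in Ici t, W (Iic x) ^ ρ ∂L' + W univ ^ ρ * h := by
          gcongr
          · rw [← setLIntegral_const]
            exact setLIntegral_mono' measurableSet_Ici fun x hx =>
              ENNReal.rpow_le_rpow (hDmono hx) hρ
          · exact subset_univ _

/-- `g` is dominated `μ`-a.e. by the left limit of `x ↦ ‖g‖_{∞,(x,b),μ}`. -/
lemma ae_le_iInf_eSup (μ : Measure ℝ) (a b : ℝ) (g : ℝ → ℝ≥0∞) :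
    ∀ᵐ t ∂μ, t ∈ Ioo a b → g t ≤ ⨅ s ∈ Ioo a t, eSup μ (Ioo s b) g := by
  have h : ∀ᵐ t ∂μ, ∀ z : ℚ, ¬ (t ∈ Ioo (z : ℝ) b ∧ eSup μ (Ioo (z : ℝ) b) g < g t) :=
    ae_all_iff.2 fun z => by
      rw [ae_iff]
      simp only [not_not]
      exact measure_eSup_lt μ (Ioo (z : ℝ) b) g
  filter_upwards [h] with t ht htab
  refine le_iInf₂ fun s hs => ?_
  obtain ⟨z, hz1, hz2⟩ := exists_rat_btwn hs.2
  refine le_trans ?_ (eSup_Ioo_antitone μ b g hz1.le)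
  by_contra! hlt
  exact ht z ⟨⟨hz2, htab.2⟩, hlt⟩

lemma antitone_iInf_Ioo (a : ℝ) (G : ℝ → ℝ≥0∞) : Antitone fun t => ⨅ s ∈ Ioo a t, G s :=
  fun _ _ h => le_iInf₂ fun s hs => iInf₂_le s (show s ∈ Ioo a _ from ⟨hs.1, hs.2.trans_le h⟩)

/-- Sufficiency for `q < ∞`: Hölder's inequality with the weight `Φ`, followed by a comparison of
distribution functions, which only requires `∫_{(a,t]} Φ^{-q/r} dW ≤ ‖u‖_{q,(a,t),ν}^q`. -/
lemma lintegral_iInf_rpow_le {W N : Measure ℝ} {a b P Q R : ℝ} {Um Φ G : ℝ → ℝ≥0∞} {J : ℝ≥0∞}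
    (hP : 0 < P) (hQ : 0 < Q) (hR : 0 < R) (hPQR : P⁻¹ = Q⁻¹ + R⁻¹)
    (hW : W (Ioo a b)ᶜ = 0) (hN : N (Ioo a b)ᶜ = 0)
    (hUfin : ∀ t ∈ Ioo a b, Um t < ⊤) (hNU : ∀ t ∈ Ioo a b, N (Iio t) = Um t ^ Q)
    (hfin : ∀ t ∈ Ioo a b, W (Iic t) < ⊤) (hzero : ∀ t ∈ Ioo a b, Um t = 0 → W (Iic t) = 0)
    (hΦ : Antitone Φ) (hΦJ : ∫⁻ t, Φ t ∂W ≤ J) (hJ : J < ⊤)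
    (hΦU : ∀ t ∈ Ioo a b, Um t ≠ 0 → W (Iic t) ^ (R / Q) * (Um t ^ R)⁻¹ ≤ Φ t)
    (hG : Antitone G) :
    ∫⁻ t, (⨅ s ∈ Ioo a t, G s) ^ P ∂W ≤ (∫⁻ x, G x ^ Q ∂N) ^ (P / Q) * J ^ (P / R) := by
  set Gm : ℝ → ℝ≥0∞ := fun t => ⨅ s ∈ Ioo a t, G s with hGmdef
  have hGm : Measurable Gm := (antitone_iInf_Ioo a G).measurable
  have hΦm : Measurable Φ := hΦ.measurable
  have hconj : (Q / P).HolderConjugate (R / P) := by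
    rw [Real.holderConjugate_iff]
    have hmul : Q / P = 1 + Q / R := by
      rw [div_eq_mul_inv, hPQR]
      field_simp
    refine ⟨by rw [hmul]; linarith [div_pos hQ hR], ?_⟩
    rw [inv_div, inv_div, div_eq_mul_inv, div_eq_mul_inv, ← mul_add, ← hPQR]
    exact mul_inv_cancel₀ hP.ne'
  have hmem : ∀ᵐ t ∂W, t ∈ Ioo a b := hW
  have hΦtop : ∀ᵐ t ∂W, Φ t < ⊤ := ae_lt_top hΦm (hΦJ.trans_lt hJ).ne
  have hD0 : ∀ᵐ t ∂W, t ∈ Ioo a b → W (Iic t) ≠ 0 := by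
    rw [ae_iff]
    refine le_antisymm (measure_le_of_Iic fun t ht => ?_) zero_le
    simp only [mem_ofPred_eq, Classical.not_imp, not_not] at ht
    exact ht.2.le
  have hUinv : ∀ t ∈ Ioo a b, (Um t ^ R)⁻¹ ≠ 0 := fun t ht =>
    ENNReal.inv_ne_zero.2 (ENNReal.rpow_lt_top_of_nonneg hR.le (hUfin t ht).ne).ne
  have hbase : ∀ t ∈ Ioo a b, W (Iic t) ≠ 0 →
      Um t ≠ 0 ∧ W (Iic t) ^ (R / Q) * (Um t ^ R)⁻¹ ≠ 0 := by
    intro t ht hD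
    have hU0 : Um t ≠ 0 := fun h0 => hD (hzero t ht h0)
    exact ⟨hU0, mul_ne_zero
      (ENNReal.rpow_pos_of_nonneg (pos_iff_ne_zero.2 hD) (by positivity)).ne' (hUinv t ht)⟩
  have hΦ0 : ∀ᵐ t ∂W, Φ t ≠ 0 := by
    filter_upwards [hmem, hD0] with t ht hD h0
    obtain ⟨hU0, hne⟩ := hbase t ht (hD ht)
    exact hne (le_zero_iff.1 (h0 ▸ hΦU t ht hU0))
  -- insert the factors `Φ^{-p/r}` and `Φ^{p/r}` and use the conjugate exponents `q/p`, `r/p`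
  have hHolder : ∫⁻ t, Gm t ^ P ∂W ≤
      (∫⁻ t, Gm t ^ Q * Φ t ^ (-(Q / R)) ∂W) ^ (P / Q) * (∫⁻ t, Φ t ∂W) ^ (P / R) := by
    have h1 : ∫⁻ t, Gm t ^ P ∂W ≤
        ∫⁻ t, ((fun t => Gm t ^ P * Φ t ^ (-(P / R))) * fun t => Φ t ^ (P / R)) t ∂W := by
      refine lintegral_mono_ae ?_
      filter_upwards [hΦtop, hΦ0] with t ht h0
      simp only [Pi.mul_apply]
      rw [mul_assoc, ← ENNReal.rpow_add _ _ h0 ht.ne, neg_add_cancel, ENNReal.rpow_zero, mul_one]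
    have h2 := ENNReal.lintegral_mul_le_Lp_mul_Lq W hconj
      (f := fun t => Gm t ^ P * Φ t ^ (-(P / R))) (g := fun t => Φ t ^ (P / R))
      ((hGm.pow_const P).mul (hΦm.pow_const _)).aemeasurable (hΦm.pow_const _).aemeasurable
    refine h1.trans (h2.trans (le_of_eq ?_))
    congr 1
    · rw [one_div_div]
      congr 1
      refine lintegral_congr fun t => ?_
      rw [ENNReal.mul_rpow_of_nonneg _ _ (by positivity), ← ENNReal.rpow_mul, ← ENNReal.rpow_mul]
      congr 2 <;> field_simp
    · rw [one_div_div]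
      congr 1
      refine lintegral_congr fun t => ?_
      rw [← ENNReal.rpow_mul, show P / R * (R / P) = 1 by field_simp, ENNReal.rpow_one]
  -- both `Gm` and `G` are antitone, so it is enough to compare the two measures on initial intervals;
  -- passing to the left limit `Gm` turns `(-∞,t]` on the left into `(-∞,t)` on the right
  have hcomp : ∫⁻ t, Gm t ^ Q * Φ t ^ (-(Q / R)) ∂W ≤ ∫⁻ x, G x ^ Q ∂N := by
    set M := W.withDensity fun t => Φ t ^ (-(Q / R)) with hM
    have hMac : M ≪ W := withDensity_absolutelyContinuous _ _
    have hMtail : ∀ t ∈ Ioo a b, M (Iic t) ≤ N (Iio t) := by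
      intro t ht
      rw [hNU t ht, hM, withDensity_apply _ measurableSet_Iic]
      by_cases hD : W (Iic t) = 0
      · rw [Measure.restrict_eq_zero.2 hD, lintegral_zero_measure]
        exact zero_le
      obtain ⟨hU0, hne⟩ := hbase t ht hD
      have hlow := hΦU t ht hU0
      have hpt : ∀ x ∈ Iic t, Φ x ^ (-(Q / R)) ≤ (W (Iic t))⁻¹ * Um t ^ Q := by
        intro x hx
        have hexp : ((W (Iic t)) ^ (R / Q) * (Um t ^ R)⁻¹) ^ (Q / R) =
            W (Iic t) * (Um t ^ Q)⁻¹ := by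
          rw [ENNReal.mul_rpow_of_nonneg _ _ (by positivity), ENNReal.inv_rpow,
            ← ENNReal.rpow_mul, ← ENNReal.rpow_mul, show R / Q * (Q / R) = 1 by field_simp,
            show R * (Q / R) = Q by field_simp, ENNReal.rpow_one]
        rw [ENNReal.rpow_neg, ENNReal.inv_le_iff_inv_le, ENNReal.mul_inv, inv_inv, ← hexp]
        · exact ENNReal.rpow_le_rpow (hlow.trans (hΦ hx)) (by positivity)
        · left
          exact ENNReal.inv_ne_zero.2 (hfin t ht).ne
        · left
          exact ENNReal.inv_ne_top.2 hD
      refine (setLIntegral_mono' measurableSet_Iic hpt).trans ?_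
      rw [setLIntegral_const, mul_right_comm, ENNReal.inv_mul_cancel hD (hfin t ht).ne, one_mul]
    have heq : ∫⁻ t, Gm t ^ Q * Φ t ^ (-(Q / R)) ∂W = ∫⁻ t, Gm t ^ Q ∂M := by
      rw [hM, lintegral_withDensity_eq_lintegral_mul _ (hΦm.pow_const _) (hGm.pow_const Q)]
      exact lintegral_congr fun t => mul_comm _ _
    rw [heq]
    refine lintegral_le_of_meas_lt (hGm.pow_const Q) (hG.measurable.pow_const Q) fun s _ => ?_
    have hsub : M {t | s < Gm t ^ Q} ≤ M {t | t ∈ Ioo a b ∧ s < Gm t ^ Q} := by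
      refine measure_mono_ae ?_
      have hmemM : ∀ᵐ t ∂M, t ∈ Ioo a b := hMac hW
      filter_upwards [hmemM] with t ht hts using ⟨ht, hts⟩
    refine hsub.trans (measure_le_of_Iic fun t ht => (hMtail t ht.1).trans ?_)
    refine measure_mono_ae ?_
    have hmemN : ∀ᵐ t ∂N, t ∈ Ioo a b := hN
    filter_upwards [hmemN] with x hx hxt
    refine ht.2.trans_le (ENNReal.rpow_le_rpow ?_ hQ.le)
    exact iInf₂_le x (show x ∈ Ioo a t from ⟨hx.1, hxt⟩)
  refine hHolder.trans ?_
  gcongr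

/-- Sufficiency for `q = ∞`. -/
lemma lintegral_rpow_le_of_mul_le {W : Measure ℝ} {a b R : ℝ} {Um Φ G : ℝ → ℝ≥0∞} {J M : ℝ≥0∞}
    (hR : 0 < R) (hW : W (Ioo a b)ᶜ = 0)
    (hUfin : ∀ t ∈ Ioo a b, Um t < ⊤) (hzero : ∀ t ∈ Ioo a b, Um t = 0 → W (Iic t) = 0)
    (hΦ : Antitone Φ) (hΦJ : ∫⁻ t, Φ t ∂W ≤ J)
    (hΦU : ∀ t ∈ Ioo a b, Um t ≠ 0 → (Um t ^ R)⁻¹ ≤ Φ t)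
    (hG : ∀ t ∈ Ioo a b, G t * Um t ≤ M) :
    ∫⁻ t, G t ^ R ∂W ≤ M ^ R * J := by
  have hmem : ∀ᵐ t ∂W, t ∈ Ioo a b := hW
  have hU0 : ∀ᵐ t ∂W, t ∈ Ioo a b → Um t ≠ 0 := by
    rw [ae_iff]
    refine le_antisymm (measure_le_of_Iic fun t ht => ?_) zero_le
    simp only [mem_ofPred_eq, Classical.not_imp, not_not] at ht
    exact (hzero t ht.1 ht.2).le
  calc ∫⁻ t, G t ^ R ∂W ≤ ∫⁻ t, M ^ R * Φ t ∂W := by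
        refine lintegral_mono_ae ?_
        filter_upwards [hmem, hU0] with t ht hU
        calc G t ^ R ≤ (M * (Um t)⁻¹) ^ R := by
              refine ENNReal.rpow_le_rpow ?_ hR.le
              rw [← div_eq_mul_inv, ENNReal.le_div_iff_mul_le (.inl (hU ht)) (.inl (hUfin t ht).ne)]
              exact hG t ht
          _ = M ^ R * (Um t ^ R)⁻¹ := by
              rw [ENNReal.mul_rpow_of_nonneg _ _ hR.le, ENNReal.inv_rpow]
          _ ≤ M ^ R * Φ t := by
              gcongr
              exact hΦU t ht (hU ht)
    _ = M ^ R * ∫⁻ t, Φ t ∂W := lintegral_const_mul _ hΦ.measurable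
    _ ≤ _ := by gcongr

/-! ### Weighted measures -/

/-- The measure `w^p dμ` on `(a,b)`, so that `‖f w‖_{p,(a,b),μ}^p = ∫ f^p d(wMeas p μ a b w)`
for finite `p`. -/
def wMeas (p : ℝ≥0∞) (μ : Measure ℝ) (a b : ℝ) (w : ℝ → ℝ≥0∞) : Measure ℝ :=
  (μ.withDensity fun x => w x ^ p.toReal).restrict (Ioo a b)

lemma wMeas_compl (p : ℝ≥0∞) (μ : Measure ℝ) (a b : ℝ) (w : ℝ → ℝ≥0∞) :
    wMeas p μ a b w (Ioo a b)ᶜ = 0 := by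
  rw [wMeas, Measure.restrict_apply measurableSet_Ioo.compl, compl_inter_self, measure_empty]

lemma wMeas_apply {p : ℝ≥0∞} (hp0 : p ≠ 0) (hp : p ≠ ⊤) (μ : Measure ℝ) {a b : ℝ}
    (w : ℝ → ℝ≥0∞) {S T : Set ℝ} (hS : MeasurableSet S) (hST : S ∩ Ioo a b = T) :
    wMeas p μ a b w S = Nrm p μ T w ^ p.toReal := by
  rw [wMeas, Measure.restrict_apply hS, hST, Nrm_rpow hp0 hp, withDensity_apply]
  exact hST ▸ hS.inter measurableSet_Ioo

lemma Iic_inter_Ioo {a b x : ℝ} (hx : x < b) : Iic x ∩ Ioo a b = Ioc a x := by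
  ext y
  simp only [mem_inter_iff, mem_Iic, mem_Ioo, mem_Ioc]
  exact ⟨fun h => ⟨h.2.1, h.1⟩, fun h => ⟨h.2, h.1, h.2.trans_lt hx⟩⟩

lemma Iio_inter_Ioo {a b x : ℝ} (hx : x ≤ b) : Iio x ∩ Ioo a b = Ioo a x := by
  ext y
  simp only [mem_inter_iff, mem_Iio, mem_Ioo]
  exact ⟨fun h => ⟨h.2.1, h.1⟩, fun h => ⟨h.2, h.1, h.2.trans_le hx⟩⟩

lemma Ici_inter_Ioo {a b x : ℝ} (hx : a < x) : Ici x ∩ Ioo a b = Ico x b := by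
  ext y
  simp only [mem_inter_iff, mem_Ici, mem_Ioo, mem_Ico]
  exact ⟨fun h => ⟨h.1, h.2.2⟩, fun h => ⟨h.1, hx.trans_le h.1, h.2⟩⟩

lemma lintegral_wMeas (p : ℝ≥0∞) (μ : Measure ℝ) (a b : ℝ) {w f : ℝ → ℝ≥0∞} (hw : Measurable w)
    (hf : Measurable f) :
    ∫⁻ x, f x ∂wMeas p μ a b w = ∫⁻ x in Ioo a b, w x ^ p.toReal * f x ∂μ := by
  rw [wMeas, restrict_withDensity measurableSet_Ioo,
    lintegral_withDensity_eq_lintegral_mul _ (hw.pow_const _) hf]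
  rfl

lemma Nrm_mul_rpow {p : ℝ≥0∞} (hp0 : p ≠ 0) (hp : p ≠ ⊤) (μ : Measure ℝ) (a b : ℝ)
    {w f : ℝ → ℝ≥0∞} (hw : Measurable w) (hf : Measurable f) :
    Nrm p μ (Ioo a b) (fun x => w x * f x) ^ p.toReal
      = ∫⁻ x, f x ^ p.toReal ∂wMeas p μ a b w := by
  rw [Nrm_rpow hp0 hp, lintegral_wMeas p μ a b hw (hf.pow_const _)]
  exact lintegral_congr fun x => ENNReal.mul_rpow_of_nonneg _ _ ENNReal.toReal_nonneg

lemma exponent_facts {p q r : ℝ≥0∞} (hp : 0 < p) (hpq : p < q) (hr : r⁻¹ = p⁻¹ - q⁻¹) :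
    0 < p.toReal ∧ 0 < r.toReal ∧ p.toReal⁻¹ = q.toReal⁻¹ + r.toReal⁻¹ := by
  have hpt : p ≠ ⊤ := (hpq.trans_le le_top).ne
  have hP : 0 < p.toReal := ENNReal.toReal_pos hp.ne' hpt
  have hpi : p⁻¹ ≠ ⊤ := ENNReal.inv_ne_top.2 hp.ne'
  have hlt : q⁻¹ < p⁻¹ := ENNReal.inv_lt_inv.2 hpq
  have hr0 : r ≠ 0 := by
    intro h
    rw [h, ENNReal.inv_zero] at hr
    exact absurd hr.symm (ne_top_of_le_ne_top hpi tsub_le_self)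
  have hrt : r ≠ ⊤ := by
    intro h
    rw [h, ENNReal.inv_top] at hr
    exact absurd hr.symm (tsub_pos_of_lt hlt).ne'
  refine ⟨hP, ENNReal.toReal_pos hr0 hrt, ?_⟩
  have := congrArg ENNReal.toReal hr
  rw [ENNReal.toReal_sub_of_le hlt.le hpi, ENNReal.toReal_inv, ENNReal.toReal_inv,
    ENNReal.toReal_inv] at this
  linarith

/-! ### Sufficiency of the condition -/

section Main

variable {p q r : ℝ≥0∞} {a b : ℝ} {μ ν lam : Measure ℝ} {w u : ℝ → ℝ≥0∞}

/-- The condition `A₂′ < ∞` implies the inequality with constant `2^{1/r} A₂′`. -/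
lemma inequality_of_finite (hp : 0 < p) (hpq : p < q) (hr : r⁻¹ = p⁻¹ - q⁻¹)
    (hw : Measurable w) (hu : Measurable u)
    (hU : ∀ t ∈ Ioo a b, Nrm q ν (Ioc a t) u < ⊤)
    (hlam : ∀ α β : ℝ, a < α → α ≤ β → β < b → lam (Ioc α β) =
      (uNplus q ν a b u α ^ r.toReal)⁻¹ - (uNplus q ν a b u β ^ r.toReal)⁻¹)
    {A : ℝ≥0∞} (hA : (∫⁻ x in Ioo a b, Nrm p μ (Ioc a x) w ^ r.toReal ∂lam) ^ (1 / r.toReal) +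
      Nrm p μ (Ioo a b) w * (Nrm q ν (Ioo a b) u)⁻¹ ≤ A) (hAtop : A < ⊤)
    {g : ℝ → ℝ≥0∞} (hg : Measurable g) :
    Nrm p μ (Ioo a b) (fun t => g t * w t)
      ≤ 2 ^ (1 / r.toReal) * A * RHSsup q a b μ ν u g := by
  obtain ⟨hP, hR, hPQR⟩ := exponent_facts hp hpq hr
  have hpt : p ≠ ⊤ := (hpq.trans_le le_top).ne
  have hq0 : q ≠ 0 := (hp.trans hpq).ne'
  set P := p.toReal
  set Q := q.toReal
  set R := r.toReal
  set ρ := R / Q with hρdef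
  have hρ : 0 ≤ ρ := div_nonneg hR.le ENNReal.toReal_nonneg
  have hPρ : P * (ρ + 1) = R := by
    have : ρ + 1 = R * P⁻¹ := by
      rw [hPQR, mul_add, mul_inv_cancel₀ hR.ne', hρdef, div_eq_mul_inv]
    rw [this]
    field_simp
  set W := wMeas p μ a b w with hWdef
  set L := lam.restrict (Ioo a b) with hLdef
  set Um : ℝ → ℝ≥0∞ := fun t => Nrm q ν (Ioo a t) u with hUmdef
  set h : ℝ≥0∞ := (Nrm q ν (Ioo a b) u ^ R)⁻¹ with hhdef
  set J : ℝ≥0∞ := 2 * A ^ R with hJdef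
  have hWc : W (Ioo a b)ᶜ = 0 := wMeas_compl p μ a b w
  have hLc : L (Ioo a b)ᶜ = 0 := by
    rw [hLdef, Measure.restrict_apply measurableSet_Ioo.compl, compl_inter_self, measure_empty]
  have hLIci : ∀ t ∈ Ioo a b, L (Ici t) = lam (Ico t b) := fun t ht => by
    rw [hLdef, Measure.restrict_apply measurableSet_Ici, Ici_inter_Ioo ht.1]
  have hWIic : ∀ x ∈ Ioo a b, W (Iic x) = Nrm p μ (Ioc a x) w ^ P := fun x hx =>
    wMeas_apply hp.ne' hpt μ w measurableSet_Iic (Iic_inter_Ioo hx.2)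
  have hWuniv : W univ = Nrm p μ (Ioo a b) w ^ P :=
    wMeas_apply hp.ne' hpt μ w MeasurableSet.univ (univ_inter _)
  have hUfin : ∀ t ∈ Ioo a b, Um t < ⊤ := fun t ht =>
    (Nrm_mono measurableSet_Ioo Ioo_subset_Ioc_self fun _ _ => le_rfl).trans_lt (hU t ht)
  have hJ : ∫⁻ x, W (Iic x) ^ (ρ + 1) ∂L + W univ ^ (ρ + 1) * h ≤ J := by
    rw [hJdef, two_mul]
    refine add_le_add ?_ ?_
    · have e : ∫⁻ x, W (Iic x) ^ (ρ + 1) ∂L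
          = ∫⁻ x in Ioo a b, Nrm p μ (Ioc a x) w ^ R ∂lam := by
        refine setLIntegral_congr_fun measurableSet_Ioo fun x hx => ?_
        rw [hWIic x hx, ← ENNReal.rpow_mul, hPρ]
      rw [e, ← ENNReal.rpow_inv_le_iff hR, ← one_div]
      exact le_self_add.trans hA
    · rw [hWuniv, ← ENNReal.rpow_mul, hPρ, hhdef, ← ENNReal.inv_rpow,
        ← ENNReal.mul_rpow_of_nonneg _ _ hR.le]
      exact ENNReal.rpow_le_rpow (le_add_self.trans hA) hR.le
  have hJtop : J < ⊤ := ENNReal.mul_lt_top (by simp) (ENNReal.rpow_lt_top_of_nonneg hR.le hAtop.ne)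
  obtain ⟨hfin, hzero, Φ, hΦ, hΦJ, hΦU⟩ := exists_weight (W := W) (L := L) (h := h)
    (Nrm_Ioo_monotone q ν a u) hρ hR hWc hLc hUfin
    (fun t ht => by
      rw [hLIci t ht]
      exact inv_le_lam_Ico_add hq0 hR hlam ht.1 ht.2)
    (fun t ht => by
      rw [hLIci t ht]
      exact lam_Ico_le hq0 hR hlam) hJ hJtop
  set G : ℝ → ℝ≥0∞ := fun x => eSup μ (Ioo x b) g with hGdef
  have hG : Antitone G := eSup_Ioo_antitone μ b g
  set Gm : ℝ → ℝ≥0∞ := fun t => ⨅ s ∈ Ioo a t, G s with hGmdef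
  have hGm : Antitone Gm := antitone_iInf_Ioo a G
  have hleft : Nrm p μ (Ioo a b) (fun t => g t * w t) ^ P ≤ ∫⁻ t, Gm t ^ P ∂W := by
    simp only [mul_comm (g _)]
    rw [Nrm_mul_rpow hp.ne' hpt μ a b hw hg, lintegral_wMeas p μ a b hw (hg.pow_const _),
      lintegral_wMeas p μ a b hw (hGm.measurable.pow_const _)]
    refine setLIntegral_mono_ae' measurableSet_Ioo ?_
    filter_upwards [ae_le_iInf_eSup μ a b g] with t ht htab
    gcongr
    exact ht htab
  -- both cases below give the same bound
  suffices hmain : ∫⁻ t, Gm t ^ P ∂W ≤ RHSsup q a b μ ν u g ^ P * J ^ (P / R) by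
    have h1 := hleft.trans hmain
    rw [← ENNReal.rpow_le_rpow_iff hP]
    refine h1.trans (le_of_eq ?_)
    rw [ENNReal.mul_rpow_of_nonneg _ _ hP.le, ENNReal.mul_rpow_of_nonneg _ _ hP.le, hJdef,
      ENNReal.mul_rpow_of_nonneg _ _ (by positivity), ← ENNReal.rpow_mul, ← ENNReal.rpow_mul,
      show 1 / R * P = P / R by ring, show R * (P / R) = P by field_simp, mul_comm]
  rcases eq_or_ne q ⊤ with hqt | hqt
  · have hQ0 : Q = 0 := by simp [Q, hqt]
    have hPR : P = R := by
      rw [hQ0, _root_.inv_zero, zero_add] at hPQR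
      exact inv_injective hPQR
    have hρ0 : ρ = 0 := by rw [hρdef, hQ0, _root_.div_zero]
    rw [← hPR, div_self hP.ne', ENNReal.rpow_one, hPR]
    refine lintegral_rpow_le_of_mul_le (Um := Um) hR hWc hUfin hzero hΦ hΦJ
      (fun t ht ht0 => by simpa [hρ0] using hΦU t ht ht0) fun t ht => ?_
    have hM : ν {x | x ∈ Ioo a b ∧ RHSsup q a b μ ν u g < u x * G x} = 0 := by
      have := measure_eSup_lt ν (Ioo a b) fun x => u x * G x
      simpa only [RHSsup, hqt, Nrm_top] using this
    by_cases hz : Gm t = 0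
    · simp [hz]
    -- `u ≤ RHS / Gm t` almost everywhere on `(a,t)`
    by_cases hGt : Gm t = ⊤
    · by_cases hUz : Um t = 0
      · simp [hUz]
      have hpos : ν {x | x ∈ Ioo a t ∧ 0 < u x} ≠ 0 := by
        intro h0
        refine hUz (le_zero_iff.1 ?_)
        simp only [hUmdef, hqt, Nrm_top]
        exact eSup_le_iff.2 h0
      by_contra! hlt
      refine hpos (measure_mono_null ?_ hM)
      rintro x ⟨hx, hux⟩
      have hGx : G x = ⊤ := top_le_iff.1 (hGt ▸ iInf₂_le x hx)
      refine ⟨⟨hx.1, hx.2.trans ht.2⟩, ?_⟩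
      rw [hGx, ENNReal.mul_top hux.ne']
      exact hlt.trans_le le_top
    rw [mul_comm, ← ENNReal.le_div_iff_mul_le (.inl hz) (.inl hGt)]
    simp only [hUmdef, hqt, Nrm_top]
    rw [eSup_le_iff]
    refine measure_mono_null ?_ hM
    rintro x ⟨hx, hlt⟩
    refine ⟨⟨hx.1, hx.2.trans ht.2⟩, ?_⟩
    rw [← hqt, ENNReal.div_lt_iff (.inl hz) (.inl hGt)] at hlt
    refine hlt.trans_le ?_
    gcongr
    exact iInf₂_le x hx
  · have hQ : 0 < Q := ENNReal.toReal_pos hq0 hqt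
    have hkey := lintegral_iInf_rpow_le (W := W) (N := wMeas q ν a b u) hP hQ hR hPQR hWc
      (wMeas_compl q ν a b u) hUfin
      (fun t ht => wMeas_apply hq0 hqt ν u measurableSet_Iio (Iio_inter_Ioo ht.2.le))
      hfin hzero hΦ hΦJ hJtop hΦU hG
    refine hkey.trans (le_of_eq ?_)
    rw [← Nrm_mul_rpow hq0 hqt ν a b hu hG.measurable, ← ENNReal.rpow_mul,
      show Q * (P / Q) = P by field_simp]
    rfl

end Main

/-! ### A weighted Hardy inequality -/

lemma rpow_neg_anti {x y : ℝ≥0∞} {z : ℝ} (hz : 0 ≤ z) (h : x ≤ y) : y ^ (-z) ≤ x ^ (-z) := by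
  rw [ENNReal.rpow_neg, ENNReal.rpow_neg]
  exact ENNReal.inv_le_inv.2 (ENNReal.rpow_le_rpow h hz)

lemma setLIntegral_Iio_half_le {N : Measure ℝ} {y : ℝ} (h : N (Iio y) < ⊤) :
    ∫⁻ x in Iio y, N (Iic x) ^ (-(1 / 2) : ℝ) ∂N ≤ 2 * N (Iio y) ^ (1 / 2 : ℝ) := by
  have : IsFiniteMeasure (N.restrict (Iio y)) := ⟨by simpa using h⟩
  have h1 := lintegral_Iic_rpow_neg_half_le (N.restrict (Iio y))
  rw [Measure.restrict_apply_univ] at h1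
  refine le_trans (lintegral_mono fun x => ?_) h1
  exact rpow_neg_anti (by norm_num) (Measure.restrict_apply_le _ _)

lemma setLIntegral_Ioi_half_le (L : Measure ℝ) [IsFiniteMeasure L] (x : ℝ) :
    ∫⁻ y in Ioi x, L (Ici y) ^ (-(1 / 2) : ℝ) ∂L ≤ 2 * L (Ioi x) ^ (1 / 2 : ℝ) := by
  have h1 := lintegral_Ici_rpow_neg_half_le (L.restrict (Ioi x))
  rw [Measure.restrict_apply_univ] at h1
  refine le_trans (lintegral_mono fun y => ?_) h1
  exact rpow_neg_anti (by norm_num) (Measure.restrict_apply_le _ _)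

/-- A Hardy inequality for the tail operator `k ↦ ∫_{(x,b)} k dL`, proved by Hölder's inequality
with the weight `Um^{p/2}` and Tonelli; the exponent `1/2` makes both one-dimensional integrals
that occur instances of `∫ N^{-1/2} dN ≤ 2 N^{1/2}`. -/
lemma hardy_tail {N L : Measure ℝ} [IsFiniteMeasure L] {a b α β P Q R : ℝ} {Um Up K : ℝ → ℝ≥0∞}
    (hP : 0 < P) (hQ : 0 < Q) (hR : 0 < R) (hPQR : P⁻¹ = Q⁻¹ + R⁻¹) (hαβ : α < β)
    (hN : N (Ioo a b)ᶜ = 0) (hL : L (Ioc α β)ᶜ = 0) (hUm : Monotone Um)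
    (hU0 : ∀ y ∈ Ioc α β, Um y ≠ 0) (hUt : ∀ y ∈ Ioc α β, Um y ≠ ⊤)
    (hLUm : ∀ y ∈ Ioc α β, L (Ici y) ≤ (Um y ^ R)⁻¹)
    (hNUm : ∀ y ∈ Ioc α β, N (Iio y) ≤ Um y ^ Q)
    (hLUp : ∀ x ∈ Ioo a b, L (Ioi x) ≤ (Up x ^ R)⁻¹)
    (hNUp : ∀ x ∈ Ioo a b, x < β → N (Iic x) ≤ Up x ^ Q) (hK : Measurable K) :
    ∫⁻ x, (∫⁻ y in Ioi x, K y ∂L) ^ (Q / P) ∂N ≤ 2 ^ (1 + Q / R) * ∫⁻ y, K y ^ (Q / P) ∂L := by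
  have hconj : (Q / P).HolderConjugate (R / P) := by
    rw [Real.holderConjugate_iff]
    have hmul : Q / P = 1 + Q / R := by
      rw [div_eq_mul_inv, hPQR]
      field_simp
    refine ⟨by rw [hmul]; linarith [div_pos hQ hR], ?_⟩
    rw [inv_div, inv_div, div_eq_mul_inv, div_eq_mul_inv, ← mul_add, ← hPQR]
    exact mul_inv_cancel₀ hP.ne'
  have hUmm : Measurable Um := hUm.measurable
  have hβ : β ∈ Ioc α β := ⟨hαβ, le_rfl⟩
  have hmemL : ∀ᵐ y ∂L, y ∈ Ioc α β := hL
  have hmemN : ∀ᵐ x ∂N, x ∈ Ioo a b := hN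
  have hNfin : ∀ y ∈ Ioc α β, N (Iio y) < ⊤ := fun y hy =>
    (hNUm y hy).trans_lt (ENNReal.rpow_lt_top_of_nonneg hQ.le (hUt y hy))
  set k : ℝ → ℝ≥0∞ := fun y => K y ^ (Q / P) * Um y ^ (-(Q / 2)) with hkdef
  have hk : Measurable k := (hK.pow_const _).mul (hUmm.pow_const _)
  set ω : ℝ → ℝ≥0∞ := fun x => N (Iic x) ^ (-(1 / 2) : ℝ) with hωdef
  have hω : Measurable ω := (measurable_measure_Iic N).pow_const _
  -- Hölder's inequality with the factors `Um^{-p/2}` and `Um^{p/2}`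
  have hpt : ∀ x ∈ Ioo a b, x < β → (∫⁻ y in Ioi x, K y ∂L) ^ (Q / P) ≤
      2 ^ (Q / R) * (ω x * ∫⁻ y in Ioi x, k y ∂L) := by
    intro x hx hxβ
    have h1 : ∫⁻ y in Ioi x, K y ∂L ≤
        ∫⁻ y in Ioi x, ((fun y => K y * Um y ^ (-(P / 2))) * fun y => Um y ^ (P / 2)) y ∂L := by
      refine lintegral_mono_ae ?_
      filter_upwards [ae_restrict_of_ae hmemL] with y hy
      simp only [Pi.mul_apply]
      rw [mul_assoc, ← ENNReal.rpow_add _ _ (hU0 y hy) (hUt y hy), neg_add_cancel,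
        ENNReal.rpow_zero, mul_one]
    have h2 := h1.trans (ENNReal.lintegral_mul_le_Lp_mul_Lq (L.restrict (Ioi x)) hconj
      (f := fun y => K y * Um y ^ (-(P / 2))) (g := fun y => Um y ^ (P / 2))
      (hK.mul (hUmm.pow_const _)).aemeasurable (hUmm.pow_const _).aemeasurable)
    have e1 : ∀ y, (K y * Um y ^ (-(P / 2))) ^ (Q / P) = k y := fun y => by
      rw [ENNReal.mul_rpow_of_nonneg _ _ (by positivity), ← ENNReal.rpow_mul,
        show -(P / 2) * (Q / P) = -(Q / 2) by field_simp]
    have e2 : ∀ y, (Um y ^ (P / 2)) ^ (R / P) = Um y ^ (R / 2) := fun y => by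
      rw [← ENNReal.rpow_mul, show P / 2 * (R / P) = R / 2 by field_simp]
    simp only [e1, e2, one_div_div] at h2
    have h3 : ∫⁻ y in Ioi x, Um y ^ (R / 2) ∂L ≤ 2 * Up x ^ (-(R / 2)) := by
      have h4 : ∫⁻ y in Ioi x, Um y ^ (R / 2) ∂L ≤
          ∫⁻ y in Ioi x, L (Ici y) ^ (-(1 / 2) : ℝ) ∂L := by
        refine lintegral_mono_ae ?_
        filter_upwards [ae_restrict_of_ae hmemL] with y hy
        have h5 : Um y ^ R ≤ (L (Ici y))⁻¹ := ENNReal.le_inv_iff_le_inv.2 (hLUm y hy)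
        have h6 := ENNReal.rpow_le_rpow h5 (z := 1 / 2) (by norm_num)
        rwa [← ENNReal.rpow_mul, ENNReal.inv_rpow, ← ENNReal.rpow_neg,
          show R * (1 / 2) = R / 2 by ring] at h6
      refine h4.trans ((setLIntegral_Ioi_half_le L x).trans ?_)
      gcongr
      have h6 := ENNReal.rpow_le_rpow (hLUp x hx) (z := 1 / 2) (by norm_num)
      rwa [← ENNReal.rpow_neg, ← ENNReal.rpow_mul, show -R * (1 / 2) = -(R / 2) by ring] at h6
    calc (∫⁻ y in Ioi x, K y ∂L) ^ (Q / P)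
        ≤ ((∫⁻ y in Ioi x, k y ∂L) ^ (P / Q) * (2 * Up x ^ (-(R / 2))) ^ (P / R)) ^ (Q / P) := by
          refine ENNReal.rpow_le_rpow (h2.trans ?_) (by positivity)
          gcongr
      _ = (∫⁻ y in Ioi x, k y ∂L) * (2 ^ (Q / R) * Up x ^ (-(Q / 2))) := by
          rw [ENNReal.mul_rpow_of_nonneg _ _ (by positivity), ← ENNReal.rpow_mul,
            ← ENNReal.rpow_mul, show P / Q * (Q / P) = 1 by field_simp, ENNReal.rpow_one,
            show P / R * (Q / P) = Q / R by field_simp,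
            ENNReal.mul_rpow_of_nonneg _ _ (by positivity), ← ENNReal.rpow_mul,
            show -(R / 2) * (Q / R) = -(Q / 2) by field_simp]
      _ ≤ (∫⁻ y in Ioi x, k y ∂L) * (2 ^ (Q / R) * ω x) := by
          gcongr
          have h7 := rpow_neg_anti (z := 1 / 2) (by norm_num) (hNUp x hx hxβ)
          rwa [← ENNReal.rpow_mul, show Q * -(1 / 2) = -(Q / 2) by ring] at h7
      _ = _ := by ring
  -- `N` is only known to be finite to the left of `β`, and the tails vanish beyond `β`
  set N' := N.restrict (Iio β) with hN'
  have : IsFiniteMeasure N' := ⟨by simpa [hN'] using hNfin β hβ⟩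
  have hstep : ∫⁻ x, (∫⁻ y in Ioi x, K y ∂L) ^ (Q / P) ∂N ≤
      2 ^ (Q / R) * ∫⁻ x, ω x * ∫⁻ y in Ioi x, k y ∂L ∂N' := by
    have e : ∀ x, (∫⁻ y in Ioi x, K y ∂L) ^ (Q / P) =
        (Iio β).indicator (fun x => (∫⁻ y in Ioi x, K y ∂L) ^ (Q / P)) x := by
      intro x
      by_cases hx : x < β
      · rw [indicator_of_mem (show x ∈ Iio β from hx)]
      · rw [indicator_of_notMem (show x ∉ Iio β from hx)]
        have hz : L (Ioi x) = 0 := by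
          have hsub : Ioi x ⊆ (Ioc α β)ᶜ := fun y hy hy2 => hx (lt_of_lt_of_le hy hy2.2)
          exact measure_mono_null hsub hL
        rw [Measure.restrict_eq_zero.2 hz, lintegral_zero_measure,
          ENNReal.zero_rpow_of_pos (by positivity)]
    have hmeas : Measurable fun x => ω x * ∫⁻ y in Ioi x, k y ∂L :=
      hω.mul (Antitone.measurable fun _ _ h => lintegral_mono_set (Ioi_subset_Ioi h))
    rw [lintegral_congr e, lintegral_indicator measurableSet_Iio, ← lintegral_const_mul _ hmeas]
    refine setLIntegral_mono_ae' measurableSet_Iio ?_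
    filter_upwards [hmemN] with x hx hxβ using hpt x hx hxβ
  have hswap : ∫⁻ x, ω x * ∫⁻ y in Ioi x, k y ∂L ∂N' =
      ∫⁻ y, k y * ∫⁻ x in Iio y, ω x ∂N' ∂L := by
    have := lintegral_region_swap (m₁ := N') (m₂ := L) (S := {z | z.1 < z.2})
      (measurableSet_lt measurable_fst measurable_snd) hω hk
    simpa [Ioi_def, Iio_def] using this
  have hinner : ∫⁻ y, k y * ∫⁻ x in Iio y, ω x ∂N' ∂L ≤ ∫⁻ y, 2 * K y ^ (Q / P) ∂L := by
    refine lintegral_mono_ae ?_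
    filter_upwards [hmemL] with y hy
    have h8 : ∫⁻ x in Iio y, ω x ∂N' ≤ 2 * Um y ^ (Q / 2) := by
      have h9 : ∫⁻ x in Iio y, ω x ∂N' ≤ ∫⁻ x in Iio y, ω x ∂N :=
        lintegral_mono' (Measure.restrict_mono subset_rfl Measure.restrict_le_self) le_rfl
      refine h9.trans ((setLIntegral_Iio_half_le (hNfin y hy)).trans ?_)
      gcongr
      have h10 := ENNReal.rpow_le_rpow (hNUm y hy) (z := 1 / 2) (by norm_num)
      rwa [← ENNReal.rpow_mul, show Q * (1 / 2) = Q / 2 by ring] at h10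
    calc k y * ∫⁻ x in Iio y, ω x ∂N' ≤ k y * (2 * Um y ^ (Q / 2)) := by gcongr
      _ = 2 * (K y ^ (Q / P) * (Um y ^ (-(Q / 2)) * Um y ^ (Q / 2))) := by
          rw [hkdef]
          ring
      _ = 2 * K y ^ (Q / P) := by
          rw [← ENNReal.rpow_add _ _ (hU0 y hy) (hUt y hy), neg_add_cancel, ENNReal.rpow_zero,
            mul_one]
  rw [lintegral_const_mul _ (hK.pow_const _)] at hinner
  calc _ ≤ _ := hstep
    _ ≤ 2 ^ (Q / R) * (2 * ∫⁻ y, K y ^ (Q / P) ∂L) := by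
        rw [hswap]
        gcongr
    _ = _ := by
        rw [ENNReal.rpow_add _ _ (by norm_num) (by norm_num), ENNReal.rpow_one]
        ring

/-! ### Necessity of the condition -/

section Necessity

variable {p q r : ℝ≥0∞} {a b : ℝ} {μ ν lam : Measure ℝ} {w u : ℝ → ℝ≥0∞} {c : ℝ≥0∞}

lemma Nrm_indicator_Iio_le (hq0 : q ≠ 0) {t : ℝ} (ht : t ≤ b) :
    Nrm q ν (Ioo a b) ((Iio t).indicator u) ≤ Nrm q ν (Ioo a t) u := by
  have hT : Iio t ∩ Ioo a b = Ioo a t := Iio_inter_Ioo ht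
  rcases eq_or_ne q ⊤ with rfl | hq
  · rw [Nrm_top, Nrm_top, eSup_le_iff]
    refine measure_mono_null ?_ (measure_eSup_lt ν (Ioo a t) u)
    rintro y ⟨hy, hlt⟩
    by_cases hyt : y ∈ Iio t
    · rw [indicator_of_mem hyt] at hlt
      exact ⟨⟨hy.1, hyt⟩, hlt⟩
    · rw [indicator_of_notMem hyt] at hlt
      exact absurd hlt ENNReal.not_lt_zero
  · rw [Nrm_of_ne_top hq, Nrm_of_ne_top hq]
    refine ENNReal.rpow_le_rpow (le_of_eq ?_) (by positivity)
    rw [← hT, ← Measure.restrict_restrict measurableSet_Iio, ← lintegral_indicator measurableSet_Iio]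
    refine lintegral_congr fun x => ?_
    by_cases hx : x ∈ Iio t
    · rw [indicator_of_mem hx, indicator_of_mem hx]
    · rw [indicator_of_notMem hx, indicator_of_notMem hx,
        ENNReal.zero_rpow_of_pos (ENNReal.toReal_pos hq0 hq)]

/-- Testing the inequality with the characteristic function of `(a,t]`. -/
lemma Nrm_Ioc_le_of_inequality (hq0 : q ≠ 0)
    (hc : ∀ g : ℝ → ℝ≥0∞, Measurable g →
      Nrm p μ (Ioo a b) (fun t => g t * w t) ≤ c * RHSsup q a b μ ν u g)
    {t : ℝ} (ht : t ∈ Ioo a b) :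
    Nrm p μ (Ioc a t) w ≤ c * Nrm q ν (Ioo a t) u := by
  have h := hc ((Iic t).indicator 1) (measurable_one.indicator measurableSet_Iic)
  refine le_trans ?_ (h.trans ?_)
  · have hsub : Ioc a t ⊆ Ioo a b := fun x hx => ⟨hx.1, hx.2.trans_lt ht.2⟩
    refine Nrm_mono measurableSet_Ioc hsub fun x hx => ?_
    rw [indicator_of_mem (show x ∈ Iic t from hx.2), Pi.one_apply, one_mul]
  · gcongr
    refine le_trans ?_ (Nrm_indicator_Iio_le (b := b) hq0 ht.2.le)
    refine Nrm_mono measurableSet_Ioo subset_rfl fun x _ => ?_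
    by_cases hx : x ∈ Iio t
    · rw [indicator_of_mem hx]
      refine mul_le_of_le_one_right' (eSup_le_of_forall fun y _ => ?_)
      exact indicator_le_self' (fun _ _ => zero_le) y
    · rw [indicator_of_notMem hx, le_zero_iff]
      have h0 : eSup μ (Ioo x b) ((Iic t).indicator 1) = 0 := by
        refine le_zero_iff.1 (eSup_le_of_forall fun y hy => ?_)
        rw [indicator_of_notMem]
        exact fun hyt => hx (lt_of_lt_of_le hy.1 hyt)
      rw [h0, mul_zero]

/-- Testing the inequality with `g = 1`. -/
lemma Nrm_div_le_of_inequality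
    (hc : ∀ g : ℝ → ℝ≥0∞, Measurable g →
      Nrm p μ (Ioo a b) (fun t => g t * w t) ≤ c * RHSsup q a b μ ν u g) :
    Nrm p μ (Ioo a b) w * (Nrm q ν (Ioo a b) u)⁻¹ ≤ c := by
  refine ENNReal.div_le_of_le_mul ?_
  have h := hc 1 measurable_one
  simp only [Pi.one_apply, one_mul] at h
  refine h.trans ?_
  gcongr
  refine Nrm_mono measurableSet_Ioo subset_rfl fun x _ => ?_
  exact mul_le_of_le_one_right' (eSup_le_of_forall fun y _ => le_rfl)

/-- For `q = ∞`, `u(x) ≤ ‖u‖_{∞,(a,x+],ν}` for `ν`-almost every `x`. -/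
lemma measure_uNplus_lt (ν : Measure ℝ) (a b : ℝ) (u : ℝ → ℝ≥0∞) :
    ν {x | x ∈ Ioo a b ∧ uNplus ⊤ ν a b u x < u x} = 0 := by
  refine measure_mono_null
    (t := ⋃ s : ℚ, {x | x ∈ Ioc a (s : ℝ) ∧ eSup ν (Ioc a (s : ℝ)) u < u x}) ?_
    (measure_iUnion_null fun s => measure_eSup_lt ν _ u)
  rintro x ⟨hx, hlt⟩
  simp only [uNplus, iInf_lt_iff] at hlt
  obtain ⟨s, hs, hlt⟩ := hlt
  obtain ⟨s', h1, h2⟩ := exists_rat_btwn hs.1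
  refine mem_iUnion.2 ⟨s', ⟨hx.1, h1.le⟩, lt_of_le_of_lt ?_ hlt⟩
  rw [Nrm_top]
  exact eSup_mono (Ioc_subset_Ioc_right h2.le) fun _ _ => le_rfl

/-- Testing the inequality with `g(t)^p = ∫_{[t,b) ∩ (α,β]} D^{r/q} dλ`, where
`D(x) = ‖w‖_{p,(a,x],μ}^p`, on an interval away from the degenerate region where `u` vanishes. -/
lemma setLIntegral_Ioc_le (hp : 0 < p) (hpq : p < q) (hr : r⁻¹ = p⁻¹ - q⁻¹)
    (hw : Measurable w) (hu : Measurable u)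
    (hU : ∀ t ∈ Ioo a b, Nrm q ν (Ioc a t) u < ⊤)
    (hlam : ∀ α β : ℝ, a < α → α ≤ β → β < b → lam (Ioc α β) =
      (uNplus q ν a b u α ^ r.toReal)⁻¹ - (uNplus q ν a b u β ^ r.toReal)⁻¹)
    (hctop : c < ⊤)
    (hc : ∀ g : ℝ → ℝ≥0∞, Measurable g →
      Nrm p μ (Ioo a b) (fun t => g t * w t) ≤ c * RHSsup q a b μ ν u g)
    {α β : ℝ} (hα : a < α) (hαβ : α < β) (hβ : β < b) (hα0 : uNplus q ν a b u α ≠ 0) :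
    ∫⁻ x in Ioc α β, Nrm p μ (Ioc a x) w ^ r.toReal ∂lam ≤
      (2 ^ (1 / p.toReal) * c) ^ r.toReal := by
  obtain ⟨hP, hR, hPQR⟩ := exponent_facts hp hpq hr
  have hpt : p ≠ ⊤ := (hpq.trans_le le_top).ne
  have hq0 : q ≠ 0 := (hp.trans hpq).ne'
  set P := p.toReal
  set Q := q.toReal with hQdef
  set R := r.toReal
  set ρ := R / Q with hρdef
  have hQ0 : 0 ≤ Q := ENNReal.toReal_nonneg
  have hρ : 0 ≤ ρ := div_nonneg hR.le hQ0
  have hρ1 : ρ + 1 = R / P := by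
    rw [div_eq_mul_inv R P, hPQR, mul_add, mul_inv_cancel₀ hR.ne', hρdef, div_eq_mul_inv]
  set W := wMeas p μ a b w with hWdef
  set L := lam.restrict (Ioc α β) with hLdef
  set D : ℝ → ℝ≥0∞ := fun x => W (Iic x) with hDdef
  have hD : Measurable D := measurable_measure_Iic W
  have hmem : ∀ x ∈ Ioc α β, x ∈ Ioo a b := fun x hx => ⟨hα.trans hx.1, hx.2.trans_lt hβ⟩
  have hβm : β ∈ Ioc α β := ⟨hαβ, le_rfl⟩
  have hWIic : ∀ x ∈ Ioo a b, W (Iic x) = Nrm p μ (Ioc a x) w ^ P := fun x hx =>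
    wMeas_apply hp.ne' hpt μ w measurableSet_Iic (Iic_inter_Ioo hx.2)
  have hUfin : ∀ t ∈ Ioo a b, Nrm q ν (Ioo a t) u < ⊤ := fun t ht =>
    (Nrm_mono measurableSet_Ioo Ioo_subset_Ioc_self fun _ _ => le_rfl).trans_lt (hU t ht)
  have hLfin : IsFiniteMeasure L := by
    refine ⟨?_⟩
    rw [hLdef, Measure.restrict_apply_univ]
    have hsub : Ioc α β ⊆ Ioo α b := fun x hx => ⟨hx.1, hx.2.trans_lt hβ⟩
    refine ((measure_mono hsub).trans (lam_Ioo_le hlam hα)).trans_lt ?_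
    rw [ENNReal.inv_lt_top]
    exact ENNReal.rpow_pos_of_nonneg (pos_iff_ne_zero.2 hα0) hR.le
  have hLc : L (Ioc α β)ᶜ = 0 := by
    rw [hLdef, Measure.restrict_apply measurableSet_Ioc.compl, compl_inter_self, measure_empty]
  have hLae : ∀ᵐ x ∂L, x ∈ Ioc α β := hLc
  have hLIoi : ∀ x ∈ Ioo a b, L (Ioi x) ≤ (uNplus q ν a b u x ^ R)⁻¹ := fun x hx => by
    refine le_trans ?_ (lam_Ioo_le hlam hx.1)
    rw [hLdef, Measure.restrict_apply measurableSet_Ioi]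
    have hsub : Ioi x ∩ Ioc α β ⊆ Ioo x b := fun y hy => ⟨hy.1, hy.2.2.trans_lt hβ⟩
    exact measure_mono hsub
  have hDβ : D β < ⊤ := by
    simp only [hDdef]
    rw [hWIic β (hmem β hβm)]
    refine ENNReal.rpow_lt_top_of_nonneg hP.le (ne_top_of_le_ne_top ?_
      (Nrm_Ioc_le_of_inequality hq0 hc (hmem β hβm)))
    exact (ENNReal.mul_lt_top hctop (hUfin β (hmem β hβm))).ne
  set J : ℝ≥0∞ := ∫⁻ x, D x ^ (R / P) ∂L with hJdef
  have hJtop : J ≠ ⊤ := by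
    have hle : J ≤ ∫⁻ _, D β ^ (R / P) ∂L := by
      refine lintegral_mono_ae ?_
      filter_upwards [hLae] with x hx
      exact ENNReal.rpow_le_rpow (measure_mono (Iic_subset_Iic.2 hx.2)) (by positivity)
    refine ne_top_of_le_ne_top ?_ hle
    rw [lintegral_const]
    exact (ENNReal.mul_lt_top (ENNReal.rpow_lt_top_of_nonneg (by positivity) hDβ.ne)
      (measure_lt_top L univ)).ne
  have hJeq : ∫⁻ x in Ioc α β, Nrm p μ (Ioc a x) w ^ R ∂lam = J := by
    refine setLIntegral_congr_fun measurableSet_Ioc fun x hx => ?_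
    simp only [hDdef]
    rw [hWIic x (hmem x hx), ← ENNReal.rpow_mul, show P * (R / P) = R by field_simp]
  set K : ℝ → ℝ≥0∞ := fun x => D x ^ ρ with hKdef
  have hK : Measurable K := hD.pow_const _
  set g : ℝ → ℝ≥0∞ := fun t => (∫⁻ x in Ici t, K x ∂L) ^ (1 / P) with hgdef
  have hg : Measurable g :=
    (Antitone.measurable fun _ _ h => lintegral_mono_set (Ici_subset_Ici.2 h)).pow_const _
  -- lower bound for the left-hand side
  have hleft : J ≤ Nrm p μ (Ioo a b) (fun t => g t * w t) ^ P := by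
    simp only [mul_comm (g _)]
    rw [Nrm_mul_rpow hp.ne' hpt μ a b hw hg]
    have hfin : IsFiniteMeasure (W.restrict (Iic β)) := ⟨by simpa using hDβ⟩
    calc J = ∫⁻ x, K x * (W.restrict (Iic β)) (Iic x) ∂L := by
          refine lintegral_congr_ae ?_
          filter_upwards [hLae] with x hx
          rw [Measure.restrict_apply measurableSet_Iic,
            inter_eq_left.2 (Iic_subset_Iic.2 hx.2), ← hρ1,
            ENNReal.rpow_add_of_nonneg _ _ hρ zero_le_one, ENNReal.rpow_one]
      _ = ∫⁻ t, ∫⁻ x in Ici t, K x ∂L ∂W.restrict (Iic β) :=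
          (lintegral_lintegral_Ici hK).symm
      _ ≤ ∫⁻ t, ∫⁻ x in Ici t, K x ∂L ∂W := lintegral_mono' Measure.restrict_le_self le_rfl
      _ = ∫⁻ t, g t ^ P ∂W := by
          refine lintegral_congr fun t => ?_
          rw [hgdef, ← ENNReal.rpow_mul, one_div_mul_cancel hP.ne', ENNReal.rpow_one]
  set G : ℝ → ℝ≥0∞ := fun x => eSup μ (Ioo x b) g with hGdef
  have hG : Measurable G := (eSup_Ioo_antitone μ b g).measurable
  have hGle : ∀ x, G x ≤ (∫⁻ y in Ioi x, K y ∂L) ^ (1 / P) := fun x => by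
    refine eSup_le_of_forall fun t ht => ENNReal.rpow_le_rpow ?_ (by positivity)
    exact lintegral_mono_set (Ici_subset_Ioi.2 ht.1)
  -- upper bound for the right-hand side
  have hright : RHSsup q a b μ ν u g ≤ 2 ^ (1 / P) * J ^ (Q⁻¹) := by
    rcases eq_or_ne q ⊤ with hqt | hqt
    · have hQz : Q = 0 := by simp [hQdef, hqt]
      have hPR : P = R := by
        rw [hQz, _root_.inv_zero, zero_add] at hPQR
        exact inv_injective hPQR
      have hρ0 : ρ = 0 := by rw [hρdef, hQz, _root_.div_zero]
      have h1 : RHSsup q a b μ ν u g ≤ 1 := by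
        rw [RHSsup, hqt, Nrm_top, eSup_le_iff]
        refine measure_mono_null ?_ (measure_uNplus_lt ν a b u)
        rintro x ⟨hx, hlt⟩
        refine ⟨hx, ?_⟩
        by_contra! hle
        refine hlt.not_ge ?_
        have hGx : G x ≤ (uNplus ⊤ ν a b u x)⁻¹ := by
          refine (hGle x).trans ?_
          simp only [hKdef, hρ0, ENNReal.rpow_zero, lintegral_one, Measure.restrict_apply_univ]
          refine (ENNReal.rpow_le_rpow (hLIoi x hx) (by positivity)).trans (le_of_eq ?_)
          rw [← ENNReal.inv_rpow, ← ENNReal.rpow_mul, hPR, mul_one_div_cancel hR.ne',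
            ENNReal.rpow_one, hqt]
        calc u x * G x ≤ uNplus ⊤ ν a b u x * (uNplus ⊤ ν a b u x)⁻¹ := by gcongr
          _ ≤ 1 := ENNReal.div_self_le_one
      refine h1.trans ?_
      rw [hQz, _root_.inv_zero, ENNReal.rpow_zero, mul_one]
      exact ENNReal.one_le_rpow (by norm_num) (by positivity)
    · have hQ : 0 < Q := ENNReal.toReal_pos hq0 hqt
      have hhardy := hardy_tail (N := wMeas q ν a b u) (L := L) (a := a) (b := b)
        (Um := fun t => Nrm q ν (Ioo a t) u) (Up := uNplus q ν a b u) (K := K)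
        hP hQ hR hPQR hαβ (wMeas_compl q ν a b u) hLc (Nrm_Ioo_monotone q ν a u)
        (fun y hy h0 => hα0 (le_zero_iff.1 (h0 ▸ uNplus_le hy.1 (hmem y hy).2.le)))
        (fun y hy => (hUfin y (hmem y hy)).ne)
        (fun y hy => by
          refine le_trans ?_ (lam_Ico_le hq0 hR hlam)
          rw [hLdef, Measure.restrict_apply measurableSet_Ici]
          have hsub : Ici y ∩ Ioc α β ⊆ Ico y b := fun z hz => ⟨hz.1, hz.2.2.trans_lt hβ⟩
          exact measure_mono hsub)
        (fun y hy => (wMeas_apply hq0 hqt ν u measurableSet_Iio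
          (Iio_inter_Ioo (hmem y hy).2.le)).le)
        hLIoi
        (fun x hx _ => by
          rw [wMeas_apply hq0 hqt ν u measurableSet_Iic (Iic_inter_Ioo hx.2)]
          exact ENNReal.rpow_le_rpow (le_uNplus x) hQ.le)
        hK
      have hKJ : ∫⁻ y, K y ^ (Q / P) ∂L = J := by
        refine lintegral_congr fun y => ?_
        rw [hKdef, ← ENNReal.rpow_mul, hρdef, show R / Q * (Q / P) = R / P by field_simp]
      rw [hKJ] at hhardy
      have hRQ : RHSsup q a b μ ν u g ^ Q ≤ 2 ^ (1 + Q / R) * J := by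
        refine le_trans ?_ hhardy
        rw [RHSsup, Nrm_mul_rpow hq0 hqt ν a b hu hG]
        refine lintegral_mono fun x => ?_
        refine (ENNReal.rpow_le_rpow (hGle x) hQ.le).trans (le_of_eq ?_)
        rw [← ENNReal.rpow_mul, show 1 / P * Q = Q / P by ring]
      rw [← ENNReal.le_rpow_inv_iff hQ] at hRQ
      refine hRQ.trans (le_of_eq ?_)
      rw [ENNReal.mul_rpow_of_nonneg _ _ (by positivity), ← ENNReal.rpow_mul, one_div P, hPQR,
        show (1 + Q / R) * Q⁻¹ = Q⁻¹ + R⁻¹ by field_simp]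
  rw [hJeq]
  -- `J^{1/p} ≤ 2^{1/p} c J^{1/q}` with `J` finite, so that a power of `J` may be cancelled
  have hJle : J ^ (P⁻¹) ≤ 2 ^ (1 / P) * c * J ^ (Q⁻¹) := by
    have h1 := ENNReal.rpow_le_rpow hleft (inv_nonneg.2 hP.le)
    rw [← ENNReal.rpow_mul, mul_inv_cancel₀ hP.ne', ENNReal.rpow_one] at h1
    calc J ^ (P⁻¹) ≤ _ := h1
      _ ≤ c * RHSsup q a b μ ν u g := hc g hg
      _ ≤ c * (2 ^ (1 / P) * J ^ (Q⁻¹)) := by gcongr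
      _ = _ := by ring
  rcases eq_or_ne J 0 with hJ0 | hJ0
  · rw [hJ0]
    exact zero_le
  rw [← ENNReal.rpow_inv_le_iff hR]
  have hpow : J ^ (Q⁻¹) ≠ 0 := (ENNReal.rpow_pos (pos_iff_ne_zero.2 hJ0) hJtop).ne'
  have hpowt : J ^ (Q⁻¹) ≠ ⊤ := ENNReal.rpow_ne_top_of_nonneg (inv_nonneg.2 hQ0) hJtop
  rw [hPQR, add_comm, ENNReal.rpow_add _ _ hJ0 hJtop] at hJle
  exact (ENNReal.mul_le_mul_iff_left hpow hpowt).1 hJle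

/-- The inequality with constant `c` forces `A₂′ ≤ (2^{1/p} + 1) c`. -/
lemma le_of_inequality (hp : 0 < p) (hpq : p < q) (hr : r⁻¹ = p⁻¹ - q⁻¹)
    (hw : Measurable w) (hu : Measurable u)
    (hU : ∀ t ∈ Ioo a b, Nrm q ν (Ioc a t) u < ⊤)
    (hlam : ∀ α β : ℝ, a < α → α ≤ β → β < b → lam (Ioc α β) =
      (uNplus q ν a b u α ^ r.toReal)⁻¹ - (uNplus q ν a b u β ^ r.toReal)⁻¹)
    (hctop : c < ⊤)
    (hc : ∀ g : ℝ → ℝ≥0∞, Measurable g →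
      Nrm p μ (Ioo a b) (fun t => g t * w t) ≤ c * RHSsup q a b μ ν u g) :
    (∫⁻ x in Ioo a b, Nrm p μ (Ioc a x) w ^ r.toReal ∂lam) ^ (1 / r.toReal) +
      Nrm p μ (Ioo a b) w * (Nrm q ν (Ioo a b) u)⁻¹ ≤ (2 ^ (1 / p.toReal) + 1) * c := by
  obtain ⟨hP, hR, -⟩ := exponent_facts hp hpq hr
  have hq0 : q ≠ 0 := (hp.trans hpq).ne'
  rw [add_mul, one_mul]
  refine add_le_add ?_ (Nrm_div_le_of_inequality hc)
  rw [one_div, ENNReal.rpow_inv_le_iff hR]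
  set f : ℝ → ℝ≥0∞ := fun x => Nrm p μ (Ioc a x) w ^ r.toReal with hfdef
  -- the interval on which `‖u‖_{q,(a,x),ν}` does not vanish
  set E : Set ℝ := {x | x ∈ Ioo a b ∧ Nrm q ν (Ioo a x) u ≠ 0} with hEdef
  have hsplit : ∫⁻ x in Ioo a b, f x ∂lam ≤ ∫⁻ x in E, f x ∂lam := by
    calc ∫⁻ x in Ioo a b, f x ∂lam ≤ ∫⁻ x in Ioo a b, E.indicator f x ∂lam := by
          refine setLIntegral_mono' measurableSet_Ioo fun x hx => ?_
          by_cases hxE : x ∈ E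
          · rw [indicator_of_mem hxE]
          · have h0 : Nrm q ν (Ioo a x) u = 0 := by
              by_contra h
              exact hxE ⟨hx, h⟩
            have h1 := Nrm_Ioc_le_of_inequality hq0 hc hx
            rw [h0, mul_zero, le_zero_iff] at h1
            simp only [hfdef, h1, ENNReal.zero_rpow_of_pos hR]
            exact zero_le
      _ ≤ ∫⁻ x, E.indicator f x ∂lam := setLIntegral_le_lintegral _ _
      _ ≤ ∫⁻ x in E, f x ∂lam := lintegral_indicator_le _ _
  refine hsplit.trans ?_
  rcases E.eq_empty_or_nonempty with hE | ⟨x₀, hx₀⟩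
  · simp [hE]
  -- points at which the right limit of the norm is positive
  set S : Set ℝ := {x | x ∈ Ioo a b ∧ uNplus q ν a b u x ≠ 0} with hSdef
  have hstep : ∀ x ∈ E, ∃ s ∈ S, s < x := by
    rintro x ⟨hx, hx0⟩
    by_contra! h
    refine hx0 (le_zero_iff.1 (Nrm_Ioo_le_of_uNplus (b := b) hq0 fun s hs => ?_))
    by_contra! hne
    exact (h s ⟨⟨hs.1, hs.2.trans hx.2⟩, (pos_iff_ne_zero.1 hne)⟩).not_gt hs.2
  obtain ⟨s₀, hs₀, -⟩ := hstep x₀ hx₀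
  obtain ⟨α, hα, hαc⟩ := exists_coinitial_seq (T := S) ⟨s₀, hs₀⟩
  obtain ⟨β, hβ, hβc⟩ := exists_cofinal_seq (T := Ioo a b) ⟨x₀, hx₀.1⟩
  have hsub : E ⊆ ⋃ n : ℕ × ℕ, Ioc (α n.1) (β n.2) := by
    intro x hx
    obtain ⟨s, hs, hsx⟩ := hstep x hx
    obtain ⟨n, hn⟩ := hαc s hs
    obtain ⟨m, hm⟩ := hβc x hx.1
    exact mem_iUnion.2 ⟨(n, m), hn.trans_lt hsx, hm⟩
  have hdir : Directed (· ⊆ ·) fun n : ℕ × ℕ => Ioc (α n.1) (β n.2) := by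
    intro i j
    obtain ⟨n, hn1, hn2⟩ : ∃ n, α n ≤ α i.1 ∧ α n ≤ α j.1 :=
      (le_total (α i.1) (α j.1)).elim (fun h => ⟨_, le_rfl, h⟩) fun h => ⟨_, h, le_rfl⟩
    obtain ⟨m, hm1, hm2⟩ : ∃ m, β i.2 ≤ β m ∧ β j.2 ≤ β m :=
      (le_total (β i.2) (β j.2)).elim (fun h => ⟨_, h, le_rfl⟩) fun h => ⟨_, le_rfl, h⟩
    exact ⟨(n, m), Ioc_subset_Ioc hn1 hm1, Ioc_subset_Ioc hn2 hm2⟩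
  refine (lintegral_mono_set hsub).trans ?_
  rw [setLIntegral_iUnion_of_directed _ hdir]
  refine iSup_le fun n => ?_
  rcases le_or_gt (β n.2) (α n.1) with h | h
  · simp [Ioc_eq_empty_of_le h]
  · exact setLIntegral_Ioc_le hp hpq hr hw hu hU hlam hctop hc (hα n.1).1.1 h (hβ n.2).2
      (hα n.1).2

end Necessity

/-- Remark 3.6 (ii)′: for `0 < p < q ≤ ∞` and `1/r = 1/p - 1/q`, the inequality
`‖gw‖_{p,(a,b),μ} ≤ c ‖u(x) ‖g‖_{∞,(x,b),μ}‖_{q,(a,b),ν}` holds for all `g ∈ B⁺((a,b))`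
iff `A₂′ = (∫_{(a,b)} ‖w‖_{p,(a,x],μ}^r d(-‖u‖_{q,(a,x+],ν}^{-r}))^{1/r}
+ ‖w‖_{p,(a,b),μ} ‖u‖_{q,(a,b),ν}⁻¹ < ∞`, where the Lebesgue–Stieltjes measure `lam`
of the non-decreasing right-continuous function `x ↦ -‖u‖_{q,(a,x+],ν}^{-r}` is
determined by `lam((α,β]) = ‖u‖_{q,(a,α+],ν}^{-r} - ‖u‖_{q,(a,β+],ν}^{-r}`.  Moreover,
the best constant satisfies `c ≈ A₂′` with constants depending only on `p` and `q`. -/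
theorem statement4 (p q r : ℝ≥0∞) (hp : 0 < p) (hpq : p < q)
    (hr : r⁻¹ = p⁻¹ - q⁻¹) :
    ∃ C₁ C₂ : ℝ≥0∞, 0 < C₁ ∧ C₂ < ⊤ ∧
      ∀ (a b : ℝ), a < b →
      ∀ (μ ν : Measure ℝ) (w u : ℝ → ℝ≥0∞),
        Measurable w → Measurable u →
        (∀ t ∈ Ioo a b, Nrm q ν (Ioc a t) u < ⊤) →
        (∀ᵐ x ∂ν.restrict (Ioo a b), u x ≠ 0) →
        ∀ lam : Measure ℝ,
        (∀ α β : ℝ, a < α → α ≤ β → β < b →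
            lam (Ioc α β) =
              (uNplus q ν a b u α ^ r.toReal)⁻¹ - (uNplus q ν a b u β ^ r.toReal)⁻¹) →
        ((∃ c : ℝ≥0∞, 0 < c ∧ c < ⊤ ∧ ∀ g : ℝ → ℝ≥0∞, Measurable g →
            Nrm p μ (Ioo a b) (fun t => g t * w t) ≤ c * RHSsup q a b μ ν u g) ↔
          (∫⁻ x in Ioo a b, Nrm p μ (Ioc a x) w ^ r.toReal ∂lam) ^ (1 / r.toReal) +
            Nrm p μ (Ioo a b) w * (Nrm q ν (Ioo a b) u)⁻¹ < ⊤) ∧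
        C₁ * ((∫⁻ x in Ioo a b, Nrm p μ (Ioc a x) w ^ r.toReal ∂lam) ^ (1 / r.toReal) +
            Nrm p μ (Ioo a b) w * (Nrm q ν (Ioo a b) u)⁻¹) ≤
          bestC p q a b μ ν w u ∧
        bestC p q a b μ ν w u ≤
          C₂ * ((∫⁻ x in Ioo a b, Nrm p μ (Ioc a x) w ^ r.toReal ∂lam) ^ (1 / r.toReal) +
            Nrm p μ (Ioo a b) w * (Nrm q ν (Ioo a b) u)⁻¹) := by
  obtain ⟨hP, hR, -⟩ := exponent_facts hp hpq hr
  have hKtop : (2 ^ (1 / p.toReal) + 1 : ℝ≥0∞) ≠ ⊤ :=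
    ENNReal.add_ne_top.2 ⟨ENNReal.rpow_ne_top_of_nonneg (by positivity) (by norm_num), by norm_num⟩
  have hK0 : (2 ^ (1 / p.toReal) + 1 : ℝ≥0∞) ≠ 0 := by simp
  have hCtop : (2 : ℝ≥0∞) ^ (1 / r.toReal) < ⊤ :=
    ENNReal.rpow_lt_top_of_nonneg (by positivity) (by norm_num)
  have hC0 : (2 : ℝ≥0∞) ^ (1 / r.toReal) ≠ 0 := (ENNReal.rpow_pos (by norm_num) (by norm_num)).ne'
  refine ⟨(2 ^ (1 / p.toReal) + 1)⁻¹, 2 ^ (1 / r.toReal), ENNReal.inv_pos.2 hKtop, hCtop, ?_⟩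
  intro a b _ μ ν w u hw hu hU _ lam hlam
  refine ⟨⟨?_, fun hA => ?_⟩, ?_, ?_⟩
  · rintro ⟨c, -, hctop, hc⟩
    exact (le_of_inequality hp hpq hr hw hu hU hlam hctop hc).trans_lt
      (ENNReal.mul_lt_top hKtop.lt_top hctop)
  · -- adding `1` makes the constant positive
    refine ⟨_, ?_, ENNReal.add_lt_top.2 ⟨ENNReal.mul_lt_top hCtop hA, one_lt_top⟩, fun g hg => ?_⟩
    · exact zero_lt_one.trans_le le_add_self
    · refine (inequality_of_finite hp hpq hr hw hu hU hlam le_rfl hA hg).trans ?_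
      gcongr
      exact le_self_add
  · refine le_sInf fun c hc => ?_
    rcases eq_or_ne c ⊤ with rfl | hctop
    · exact le_top
    have h := le_of_inequality hp hpq hr hw hu hU hlam hctop.lt_top hc
    calc _ ≤ (2 ^ (1 / p.toReal) + 1 : ℝ≥0∞)⁻¹ * ((2 ^ (1 / p.toReal) + 1) * c) := by gcongr
      _ = c := by rw [← mul_assoc, ENNReal.inv_mul_cancel hK0 hKtop, one_mul]
  · rcases eq_or_ne ((∫⁻ x in Ioo a b, Nrm p μ (Ioc a x) w ^ r.toReal ∂lam) ^ (1 / r.toReal) +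
      Nrm p μ (Ioo a b) w * (Nrm q ν (Ioo a b) u)⁻¹) ⊤ with hA | hA
    · rw [hA, ENNReal.mul_top hC0]
      exact le_top
    · exact sInf_le fun g hg => inequality_of_finite hp hpq hr hw hu hU hlam le_rfl hA.lt_top hg
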